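/- arXiv:1805.02886 — 2 statements merged into one kernel-verified Lean document; each statement's English description precedes it below -/
import Mathlib

section
/- For every integer r ≥ 2, the complete tripartite graph K(1,2,r) has local antimagic chromatic number equal to 3. -/
open scoped BigOperators

/-- The induced vertex sum: sum of labels of edges incident to `v`. -/
noncomputable def vertexSum {V : Type*} (G : SimpleGraph V) (f : Sym2 V → ℕ) (v : V) : ℕ :=
  ∑ᶠ e ∈ G.incidenceSet v, f e

/-- `f` is a local antimagic labeling of `G`: a bijection from the edge set onto
`{1, …, |E(G)|}` such that adjacent vertices get distinct induced sums. -/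
def IsLocalAntimagic {V : Type*} (G : SimpleGraph V) (f : Sym2 V → ℕ) : Prop :=
  Set.BijOn f G.edgeSet (Set.Icc 1 G.edgeSet.ncard) ∧
  ∀ u v, G.Adj u v → vertexSum G f u ≠ vertexSum G f v

/-- Number of distinct induced vertex labels of the labeling `f`. -/
noncomputable def colorCount {V : Type*} (G : SimpleGraph V) (f : Sym2 V → ℕ) : ℕ :=
  (Set.range (vertexSum G f)).ncard

/-- The local antimagic chromatic number. -/
noncomputable def chiLA {V : Type*} (G : SimpleGraph V) : ℕ :=
  sInf { n | ∃ f, IsLocalAntimagic G f ∧ colorCount G f = n }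

/-- The join `G ∨ Oₙ` of `G` with the empty graph on `n` vertices. -/
def joinEmpty {V : Type*} (G : SimpleGraph V) (n : ℕ) : SimpleGraph (V ⊕ Fin n) :=
  SimpleGraph.fromRel (fun x y =>
    (∃ a b, x = Sum.inl a ∧ y = Sum.inl b ∧ G.Adj a b) ∨ (x.isLeft ∧ y.isRight))

/-! ### Transport along graph isomorphisms -/

theorem vertexSum_iso {V W : Type} {G : SimpleGraph V} {H : SimpleGraph W} (e : G ≃g H)
    (f : Sym2 W → ℕ) (v : V) :
    vertexSum G (f ∘ Sym2.map e) v = vertexSum H f (e v) := by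
  unfold vertexSum
  have hinj : Function.Injective (Sym2.map e) := Sym2.map.injective e.injective
  have himg : H.incidenceSet (e v) = Sym2.map e '' G.incidenceSet v := by
    ext z
    constructor
    · induction z using Sym2.ind with
      | _ a b =>
        intro h
        refine ⟨s(e.symm a, e.symm b), ?_, by simp⟩
        rw [SimpleGraph.mk'_mem_incidenceSet_iff] at h ⊢
        refine ⟨e.symm.map_adj_iff.2 h.1, ?_⟩
        rcases h.2 with h | h
        · left; simp [← h]
        · right; simp [← h]
    · rintro ⟨w, hw, rfl⟩
      induction w using Sym2.ind with
      | _ a b =>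
        rw [SimpleGraph.mk'_mem_incidenceSet_iff] at hw
        rw [Sym2.map_mk, SimpleGraph.mk'_mem_incidenceSet_iff]
        refine ⟨e.map_adj_iff.2 hw.1, ?_⟩
        rcases hw.2 with h | h
        · left; simp [h]
        · right; simp [h]
  rw [himg, finsum_mem_image hinj.injOn]
  rfl

theorem good_iso {V W : Type} {G : SimpleGraph V} {H : SimpleGraph W} (e : G ≃g H)
    (f : Sym2 W → ℕ) (hf : IsLocalAntimagic H f) :
    IsLocalAntimagic G (f ∘ Sym2.map e) ∧ colorCount G (f ∘ Sym2.map e) = colorCount H f := by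
  have hinj : Function.Injective (Sym2.map e) := Sym2.map.injective e.injective
  have himg : H.edgeSet = Sym2.map e '' G.edgeSet := by
    ext z
    constructor
    · induction z using Sym2.ind with
      | _ a b =>
        intro h
        exact ⟨s(e.symm a, e.symm b), e.symm.map_adj_iff.2 h, by simp⟩
    · rintro ⟨w, hw, rfl⟩
      induction w using Sym2.ind with
      | _ a b => exact e.map_adj_iff.2 hw
  refine ⟨⟨?_, ?_⟩, ?_⟩
  · have h1 := hf.1
    have hc : H.edgeSet.ncard = G.edgeSet.ncard := by
      rw [himg, Set.ncard_image_of_injective _ hinj]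
    rw [hc] at h1
    refine h1.comp ?_
    rw [himg]
    exact hinj.injOn.bijOn_image
  · intro u v huv
    rw [vertexSum_iso, vertexSum_iso]
    exact hf.2 _ _ (e.map_adj_iff.2 huv)
  · unfold colorCount
    congr 1
    have : vertexSum G (f ∘ Sym2.map e) = vertexSum H f ∘ e := by
      funext v; exact vertexSum_iso e f v
    rw [this, e.surjective.range_comp]

theorem chiLA_iso {V W : Type} {G : SimpleGraph V} {H : SimpleGraph W} (e : G ≃g H) :
    chiLA G = chiLA H := by
  unfold chiLA
  congr 1
  ext n
  constructor
  · rintro ⟨f, hf, rfl⟩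
    exact ⟨_, (good_iso e.symm f hf).1, (good_iso e.symm f hf).2⟩
  · rintro ⟨f, hf, rfl⟩
    exact ⟨_, (good_iso e f hf).1, (good_iso e f hf).2⟩

/-! ### A concrete model of the graph -/

/-- The part containing a vertex of the model. -/
def partOf (r : ℕ) : Fin 3 ⊕ Fin r → Fin 3
  | Sum.inl i => ![0, 1, 1] i
  | Sum.inr _ => 2

/-- The model of `K(1,2,r)` on `Fin 3 ⊕ Fin r`. -/
def model (r : ℕ) : SimpleGraph (Fin 3 ⊕ Fin r) := (⊤ : SimpleGraph (Fin 3)).comap (partOf r)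

theorem model_adj (r : ℕ) (u v : Fin 3 ⊕ Fin r) : (model r).Adj u v ↔ partOf r u ≠ partOf r v :=
  Iff.rfl

instance (r : ℕ) : DecidableRel (model r).Adj := fun u v =>
  decidable_of_iff _ (model_adj r u v).symm

/-- The inclusion of the model into the sigma type. -/
def modelToSigma (r : ℕ) : Fin 3 ⊕ Fin r → (Σ i : Fin 3, ![Fin 1, Fin 2, Fin r] i)
  | Sum.inl 0 => ⟨0, (0 : Fin 1)⟩
  | Sum.inl 1 => ⟨1, (0 : Fin 2)⟩
  | Sum.inl 2 => ⟨1, (1 : Fin 2)⟩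
  | Sum.inr j => ⟨2, j⟩

theorem modelToSigma_fst (r : ℕ) (v : Fin 3 ⊕ Fin r) : (modelToSigma r v).1 = partOf r v := by
  rcases v with i | j
  · fin_cases i <;> rfl
  · rfl

theorem modelToSigma_bijective (r : ℕ) : Function.Bijective (modelToSigma r) := by
  constructor
  · have h2 : ∀ x y : Fin 2, (⟨1, x⟩ : Σ i : Fin 3, ![Fin 1, Fin 2, Fin r] i) = ⟨1, y⟩ → x = y := by
      intro x y h
      exact eq_of_heq (Sigma.mk.inj h).2
    have h3 : ∀ x y : Fin r, (⟨2, x⟩ : Σ i : Fin 3, ![Fin 1, Fin 2, Fin r] i) = ⟨2, y⟩ → x = y := by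
      intro x y h
      exact eq_of_heq (Sigma.mk.inj h).2
    intro u v h
    have hp : partOf r u = partOf r v := by
      rw [← modelToSigma_fst, ← modelToSigma_fst, h]
    rcases u with i | j <;> rcases v with i' | j'
    · fin_cases i <;> fin_cases i' <;> first
        | rfl
        | (exfalso; revert hp; simp [partOf]; done)
        | (exfalso; have := h2 _ _ h; revert this; decide)
    · exfalso; revert hp; fin_cases i <;> simp [partOf]
    · exfalso; revert hp; fin_cases i' <;> simp [partOf]
    · rw [h3 _ _ h]
  · rintro ⟨i, x⟩
    fin_cases i
    · refine ⟨Sum.inl 0, ?_⟩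
      have : x = (0 : Fin 1) := Subsingleton.elim (α := Fin 1) _ _
      subst this; rfl
    · have : ∀ x : Fin 2, x = 0 ∨ x = 1 := by decide
      rcases this x with h | h
      · subst h; exact ⟨Sum.inl 1, rfl⟩
      · subst h; exact ⟨Sum.inl 2, rfl⟩
    · exact ⟨Sum.inr x, rfl⟩

theorem chiLA_eq_model (r : ℕ) :
    chiLA (SimpleGraph.completeMultipartiteGraph ![Fin 1, Fin 2, Fin r]) = chiLA (model r) := by
  symm
  refine chiLA_iso ⟨Equiv.ofBijective _ (modelToSigma_bijective r), ?_⟩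
  intro u v
  rw [model_adj, ← modelToSigma_fst, ← modelToSigma_fst]
  rfl

theorem vertexSum_eq_sum {V : Type} [Fintype V] (G : SimpleGraph V) [DecidableRel G.Adj]
    (f : Sym2 V → ℕ) (v : V) :
    vertexSum G f v = ∑ u, if G.Adj v u then f s(v, u) else 0 := by
  unfold vertexSum
  have himg : G.incidenceSet v = (fun u => s(v, u)) '' {u | G.Adj v u} := by
    ext z
    induction z using Sym2.ind with
    | _ a b =>
      rw [SimpleGraph.mk'_mem_incidenceSet_iff]
      constructor
      · rintro ⟨h, rfl | rfl⟩
        · exact ⟨b, h, rfl⟩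
        · exact ⟨a, h.symm, Sym2.eq_swap⟩
      · rintro ⟨u, hu, h⟩
        rcases Sym2.eq_iff.1 h with ⟨rfl, rfl⟩ | ⟨rfl, rfl⟩
        · exact ⟨hu, Or.inl rfl⟩
        · exact ⟨hu.symm, Or.inr rfl⟩
  have hinj : Function.Injective (fun u => s(v, u)) := by
    intro a b h
    exact Sym2.congr_right.1 h
  rw [himg, finsum_mem_image hinj.injOn, ← Finset.sum_filter, ← finsum_mem_coe_finset]
  simp

/-- Symmetric label function from a matrix and two labels. -/
def labelFun (r : ℕ) (M : Fin 3 → ℕ → ℕ) (a b : ℕ) : Fin 3 ⊕ Fin r → Fin 3 ⊕ Fin r → ℕ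
  | Sum.inl i, Sum.inl k => if i.val + k.val = 1 then a else b
  | Sum.inl i, Sum.inr j => M i j
  | Sum.inr j, Sum.inl i => M i j
  | Sum.inr _, Sum.inr _ => 0

/-- The labeling of the model. -/
def labeling (r : ℕ) (M : Fin 3 → ℕ → ℕ) (a b : ℕ) : Sym2 (Fin 3 ⊕ Fin r) → ℕ :=
  Sym2.lift ⟨labelFun r M a b, by
    rintro (i | i) (j | j) <;> simp [labelFun, Nat.add_comm]⟩

theorem labeling_mk (r : ℕ) (M : Fin 3 → ℕ → ℕ) (a b : ℕ) (u v : Fin 3 ⊕ Fin r) :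
    labeling r M a b s(u, v) = labelFun r M a b u v := rfl

/-- Enumeration of the edges of the model. -/
def edgeEnum (r : ℕ) : (Fin 3 × Fin r) ⊕ Fin 2 → Sym2 (Fin 3 ⊕ Fin r)
  | Sum.inl p => s(Sum.inl p.1, Sum.inr p.2)
  | Sum.inr k => s(Sum.inl 0, Sum.inl k.succ)

theorem edgeEnum_injective (r : ℕ) : Function.Injective (edgeEnum r) := by
  rintro (⟨i, j⟩ | k) (⟨i', j'⟩ | k') h
  · simpa [edgeEnum] using h
  · simp [edgeEnum] at h
  · simp [edgeEnum] at h
  · simpa [edgeEnum] using h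

theorem edgeEnum_range (r : ℕ) : (model r).edgeSet = Set.range (edgeEnum r) := by
  ext z
  constructor
  · induction z using Sym2.ind with
    | _ u v =>
      intro h
      rw [SimpleGraph.mem_edgeSet, model_adj] at h
      rcases u with i | j <;> rcases v with i' | j'
      · fin_cases i <;> fin_cases i' <;> first
          | (exfalso; revert h; simp [partOf]; done)
          | exact ⟨Sum.inr 0, rfl⟩
          | exact ⟨Sum.inr 1, rfl⟩
          | exact ⟨Sum.inr 0, Sym2.eq_swap⟩
          | exact ⟨Sum.inr 1, Sym2.eq_swap⟩
      · exact ⟨Sum.inl (i, j'), rfl⟩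
      · exact ⟨Sum.inl (i', j), Sym2.eq_swap⟩
      · exact absurd rfl h
  · rintro ⟨(⟨i, j⟩ | k), rfl⟩
    · show partOf r _ ≠ partOf r _
      fin_cases i <;> simp [partOf]
    · show partOf r _ ≠ partOf r _
      fin_cases k <;> simp [partOf]

theorem model_ncard (r : ℕ) : (model r).edgeSet.ncard = 3 * r + 2 := by
  rw [edgeEnum_range, Set.ncard_range_of_injective (edgeEnum_injective r)]
  simp

theorem lower (r : ℕ) (hr : 2 ≤ r) (f : Sym2 (Fin 3 ⊕ Fin r) → ℕ)
    (hf : IsLocalAntimagic (model r) f) : 3 ≤ colorCount (model r) f := by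
  unfold colorCount
  have h1 := hf.2 (Sum.inl 0) (Sum.inl 1) (by rw [model_adj]; simp [partOf])
  have h2 := hf.2 (Sum.inl 0) (Sum.inr ⟨0, by omega⟩) (by rw [model_adj]; simp [partOf])
  have h3 := hf.2 (Sum.inl 1) (Sum.inr ⟨0, by omega⟩) (by rw [model_adj]; simp [partOf])
  have h : ({vertexSum (model r) f (Sum.inl 0), vertexSum (model r) f (Sum.inl 1),
      vertexSum (model r) f (Sum.inr ⟨0, by omega⟩)} : Set ℕ).ncard = 3 :=
    Set.ncard_eq_three.2 ⟨_, _, _, h1, h2, h3, rfl⟩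
  refine h.symm.le.trans ?_
  apply Set.ncard_le_ncard _ (Set.finite_range _)
  rintro z (rfl | rfl | rfl) <;> exact ⟨_, rfl⟩

/-- Reduction to a numerical array. -/
theorem core (r : ℕ) (hr : 2 ≤ r) (M : Fin 3 → ℕ → ℕ) (a b c s t : ℕ)
    (hinj : ∀ i i' : Fin 3, ∀ j < r, ∀ j' < r, M i j = M i' j' → i = i' ∧ j = j')
    (hM : ∀ i : Fin 3, ∀ j < r, 1 ≤ M i j ∧ M i j ≤ 3 * r + 2 ∧ M i j ≠ a ∧ M i j ≠ b)
    (hab : a ≠ b ∧ 1 ≤ a ∧ a ≤ 3 * r + 2 ∧ 1 ≤ b ∧ b ≤ 3 * r + 2)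
    (hc : ∀ j < r, M 0 j + M 1 j + M 2 j = c)
    (hs1 : ∑ j ∈ Finset.range r, M 1 j + a = s)
    (hs2 : ∑ j ∈ Finset.range r, M 2 j + b = s)
    (ht : ∑ j ∈ Finset.range r, M 0 j + a + b = t)
    (hsc : s ≠ c) (htc : t ≠ c) (hst : s ≠ t) :
    chiLA (model r) = 3 := by
  set f := labeling r M a b with hf
  have v0 : vertexSum (model r) f (Sum.inl 0) = t := by
    rw [vertexSum_eq_sum, ← ht, Finset.sum_range]
    simp [Fintype.sum_sum_type, Fin.sum_univ_three, model_adj, partOf, f, labeling_mk, labelFun]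
    ring
  have v1 : vertexSum (model r) f (Sum.inl 1) = s := by
    rw [vertexSum_eq_sum, ← hs1, Finset.sum_range]
    simp [Fintype.sum_sum_type, Fin.sum_univ_three, model_adj, partOf, f, labeling_mk, labelFun]
    ring
  have v2 : vertexSum (model r) f (Sum.inl 2) = s := by
    rw [vertexSum_eq_sum, ← hs2, Finset.sum_range]
    simp [Fintype.sum_sum_type, Fin.sum_univ_three, model_adj, partOf, f, labeling_mk, labelFun]
    ring
  have v3 : ∀ j, vertexSum (model r) f (Sum.inr j) = c := by
    intro j
    rw [vertexSum_eq_sum, ← hc j j.2]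
    simp [Fintype.sum_sum_type, Fin.sum_univ_three, model_adj, partOf, f, labeling_mk, labelFun]
  have hgood : IsLocalAntimagic (model r) f := by
    refine ⟨?_, ?_⟩
    · rw [model_ncard, edgeEnum_range]
      have hmaps : Set.MapsTo f (Set.range (edgeEnum r)) (Set.Icc 1 (3 * r + 2)) := by
        rintro _ ⟨(⟨i, j⟩ | k), rfl⟩
        · exact ⟨(hM i j j.2).1, (hM i j j.2).2.1⟩
        · fin_cases k
          · exact ⟨hab.2.1, hab.2.2.1⟩
          · exact ⟨hab.2.2.2.1, hab.2.2.2.2⟩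
      have hI : Set.InjOn f (Set.range (edgeEnum r)) := by
        have e1 : ∀ i j, f (edgeEnum r (Sum.inl (i, j))) = M i j := fun i j => rfl
        have e2 : f (edgeEnum r (Sum.inr 0)) = a := rfl
        have e3 : f (edgeEnum r (Sum.inr 1)) = b := rfl
        have hk : ∀ k : Fin 2, k = 0 ∨ k = 1 := by decide
        rintro _ ⟨(⟨i, j⟩ | k), rfl⟩ _ ⟨(⟨i', j'⟩ | k'), rfl⟩ h
        · rw [e1, e1] at h
          obtain ⟨h1, h2⟩ := hinj _ _ _ j.2 _ j'.2 h
          rw [h1, Fin.ext h2]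
        · exfalso
          have := hM i j j.2
          rcases hk k' with rfl | rfl
          · rw [e1, e2] at h; exact this.2.2.1 h
          · rw [e1, e3] at h; exact this.2.2.2 h
        · exfalso
          have := hM i' j' j'.2
          rcases hk k with rfl | rfl
          · rw [e1, e2] at h; exact this.2.2.1 h.symm
          · rw [e1, e3] at h; exact this.2.2.2 h.symm
        · rcases hk k with rfl | rfl <;> rcases hk k' with rfl | rfl
          · rfl
          · rw [e2, e3] at h; exact absurd h hab.1
          · rw [e2, e3] at h; exact absurd h.symm hab.1
          · rfl
      have himg : f '' Set.range (edgeEnum r) = Set.Icc 1 (3 * r + 2) := by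
        apply Set.eq_of_subset_of_ncard_le hmaps.image_subset
        rw [hI.ncard_image, ← edgeEnum_range, model_ncard]
        rw [← Finset.coe_Icc, Set.ncard_coe_finset]
        simp
      rw [← himg]
      exact hI.bijOn_image
    · intro u v huv
      rw [model_adj] at huv
      rcases u with i | j <;> rcases v with i' | j'
      · fin_cases i <;> fin_cases i' <;>
          simp [partOf] at huv <;> simp [v0, v1, v2, hst, hst.symm]
      · fin_cases i <;> simp [v0, v1, v2, v3, hsc, htc]
      · fin_cases i' <;> simp [v0, v1, v2, v3, hsc.symm, htc.symm]
      · exact absurd rfl huv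
  have hcount : colorCount (model r) f = 3 := by
    apply le_antisymm _ (lower r hr f hgood)
    unfold colorCount
    have hsub : Set.range (vertexSum (model r) f) ⊆ ((({t, s, c} : Finset ℕ)) : Set ℕ) := by
      rintro _ ⟨(i | j), rfl⟩
      · fin_cases i <;> simp [v0, v1, v2]
      · simp [v3]
    refine (Set.ncard_le_ncard hsub (Finset.finite_toSet _)).trans ?_
    rw [Set.ncard_coe_finset]
    exact Finset.card_le_three
  apply le_antisymm
  · exact Nat.sInf_le ⟨f, hgood, hcount⟩
  · have hne : {n | ∃ f, IsLocalAntimagic (model r) f ∧ colorCount (model r) f = n}.Nonempty :=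
      ⟨3, f, hgood, hcount⟩
    obtain ⟨g, hg, hgn⟩ := Nat.sInf_mem hne
    unfold chiLA
    rw [← hgn]
    exact lower r hr g hg

/-- Version of `core` for explicit lists. -/
theorem core_small (r : ℕ) (hr : 2 ≤ r) (x p q : List ℕ) (a b c s t : ℕ)
    (h : (∀ i i' : Fin 3, ∀ j < r, ∀ j' < r,
        (![x, p, q] i).getD j 0 = (![x, p, q] i').getD j' 0 → i = i' ∧ j = j') ∧
      (∀ i : Fin 3, ∀ j < r, 1 ≤ (![x, p, q] i).getD j 0 ∧ (![x, p, q] i).getD j 0 ≤ 3 * r + 2 ∧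
        (![x, p, q] i).getD j 0 ≠ a ∧ (![x, p, q] i).getD j 0 ≠ b) ∧
      (a ≠ b ∧ 1 ≤ a ∧ a ≤ 3 * r + 2 ∧ 1 ≤ b ∧ b ≤ 3 * r + 2) ∧
      (∀ j < r, x.getD j 0 + p.getD j 0 + q.getD j 0 = c) ∧
      ∑ j ∈ Finset.range r, p.getD j 0 + a = s ∧
      ∑ j ∈ Finset.range r, q.getD j 0 + b = s ∧
      ∑ j ∈ Finset.range r, x.getD j 0 + a + b = t ∧ s ≠ c ∧ t ≠ c ∧ s ≠ t) :
    chiLA (model r) = 3 :=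
  core r hr (fun i j => (![x, p, q] i).getD j 0) a b c s t h.1 h.2.1 h.2.2.1 h.2.2.2.1
    h.2.2.2.2.1 h.2.2.2.2.2.1 h.2.2.2.2.2.2.1 h.2.2.2.2.2.2.2.1 h.2.2.2.2.2.2.2.2.1
    h.2.2.2.2.2.2.2.2.2

set_option maxRecDepth 100000 in
set_option maxHeartbeats 4000000 in
theorem small_cases (r : ℕ) (hr : 2 ≤ r) (hr' : r ≤ 12) : chiLA (model r) = 3 := by
  interval_cases r
  · exact core_small 2 (by norm_num) [1, 5] [3, 4] [7, 2] 8 6 11 15 20 (by decide)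
  · exact core_small 3 (by norm_num) [11, 9, 10] [7, 4, 6] [3, 8, 5] 1 2 21 18 33 (by decide)
  · exact core_small 4 (by norm_num) [11, 13, 3, 12] [9, 2, 10, 5] [1, 6, 8, 4] 7 14 21 33 60 (by decide)
  · exact core_small 5 (by norm_num) [3, 4, 9, 6, 15] [17, 14, 5, 13, 8] [10, 12, 16, 11, 7] 1 2 30 58 40 (by decide)
  · exact core_small 6 (by norm_num) [16, 19, 3, 18, 14, 6] [13, 9, 15, 8, 5, 7] [1, 2, 12, 4, 11, 17] 10 20 30 67 106 (by decide)
  · exact core_small 7 (by norm_num) [3, 4, 22, 15, 7, 14, 9] [13, 19, 12, 18, 11, 17, 10] [23, 16, 5, 6, 21, 8, 20] 1 2 39 101 77 (by decide)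
  · exact core_small 8 (by norm_num) [17, 2, 3, 11, 15, 6, 18, 9] [1, 12, 20, 24, 19, 10, 14, 22] [21, 25, 16, 4, 5, 23, 7, 8] 13 26 39 135 120 (by decide)
  · exact core_small 9 (by norm_num) [3, 24, 28, 19, 27, 22, 13, 17, 12] [16, 20, 5, 23, 7, 8, 9, 21, 25] [29, 4, 15, 6, 14, 18, 26, 10, 11] 1 2 48 135 168 (by decide)
  · exact core_small 10 (by norm_num) [26, 31, 25, 14, 24, 29, 23, 12, 22, 10] [1, 15, 3, 30, 19, 6, 18, 28, 9, 11] [21, 2, 20, 4, 5, 13, 7, 8, 17, 27] 16 32 48 156 264 (by decide)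
  · exact core_small 11 (by norm_num) [3, 4, 34, 6, 7, 22, 32, 21, 31, 12, 14] [19, 24, 5, 23, 33, 27, 16, 26, 15, 20, 13] [35, 29, 18, 28, 17, 8, 9, 10, 11, 25, 30] 1 2 57 222 189 (by decide)
  · exact core_small 12 (by norm_num) [31, 2, 3, 4, 29, 35, 7, 8, 27, 14, 26, 13] [1, 18, 24, 36, 23, 16, 22, 15, 21, 33, 11, 32] [25, 37, 30, 17, 5, 6, 28, 34, 9, 10, 20, 12] 19 38 57 271 256 (by decide)

/-! ### Numerical lemmas -/

/-- Explicit sets of negative positions for the base case of `signed_sum`. -/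
def masks : List (List ℕ) :=
  [[2, 3, 4, 5], [3, 5, 6], [0, 1, 3, 4, 5], [1, 3, 4, 5], [3, 4, 6], [0, 1, 2, 4, 5], [1,
   2, 4, 5], [3, 4, 5], [0, 1, 2, 3, 5], [1, 2, 3, 5], [2, 4, 5], [0, 1, 2, 3, 4], [1, 2,
   3, 4], [2, 3, 5], [4, 6], [0, 2, 3, 4], [2, 3, 4], [4, 5], [0, 1, 3, 4], [1, 3, 4], [3,
   5], [0, 1, 2, 4], [1, 2, 4]]

set_option maxRecDepth 100000 in
/-- Signed sums of `1, 4, 7, …` hit every small target of the right parity. -/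
theorem signed_sum (n : ℕ) (hn : 7 ≤ n) : ∀ T : ℤ, |T| ≤ 3 * n + 1 →
    (T % 2 = 0 ↔ (n % 4 = 0 ∨ n % 4 = 3)) →
    ∃ ε : ℕ → Bool, ∑ j ∈ Finset.range n, (if ε j then -(3 * (j : ℤ) + 1) else 3 * j + 1) = T := by
  induction n, hn using Nat.le_induction with
  | base =>
    intro T hT hp
    have hfin : ∀ k ∈ Finset.range 23, ∃ w : List ℕ, ∑ j ∈ Finset.range 7,
        (if (decide (j ∈ w)) = true then -(3 * (j : ℤ) + 1) else 3 * j + 1) = 2 * (k : ℤ) - 22 := by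
      have hlist : ∀ k ∈ Finset.range 23, ∑ j ∈ Finset.range 7,
          (if (decide (j ∈ masks.getD k [])) = true then -(3 * (j : ℤ) + 1) else 3 * j + 1)
            = 2 * (k : ℤ) - 22 := by
        decide
      exact fun k hk => ⟨_, hlist k hk⟩
    rw [abs_le] at hT
    obtain ⟨w, hw⟩ := hfin ((T + 22) / 2).toNat (Finset.mem_range.2 (by omega))
    refine ⟨fun j => decide (j ∈ w), ?_⟩
    rw [hw]
    omega
  | succ n hn ih =>
    intro T hT hp
    rw [abs_le] at hT
    push_cast at hT
    rcases le_or_gt 0 T with h0 | h0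
    · obtain ⟨ε, hε⟩ := ih (T - (3 * n + 1)) (by rw [abs_le]; constructor <;> omega) (by omega)
      refine ⟨fun j => if j = n then false else ε j, ?_⟩
      rw [Finset.sum_range_succ]
      have : ∑ j ∈ Finset.range n, (if (if j = n then false else ε j) = true
          then -(3 * (j : ℤ) + 1) else 3 * j + 1) = T - (3 * n + 1) := by
        rw [← hε]
        refine Finset.sum_congr rfl fun j hj => ?_
        have := Finset.mem_range.1 hj
        rw [if_neg (by omega : ¬ j = n)]
      rw [this]; simp
    · obtain ⟨ε, hε⟩ := ih (T + (3 * n + 1)) (by rw [abs_le]; constructor <;> omega) (by omega)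
      refine ⟨fun j => if j = n then true else ε j, ?_⟩
      rw [Finset.sum_range_succ]
      have : ∑ j ∈ Finset.range n, (if (if j = n then true else ε j) = true
          then -(3 * (j : ℤ) + 1) else 3 * j + 1) = T + (3 * n + 1) := by
        rw [← hε]
        refine Finset.sum_congr rfl fun j hj => ?_
        have := Finset.mem_range.1 hj
        rw [if_neg (by omega : ¬ j = n)]
      rw [this]; simp; ring

theorem alt_sum (c : ℤ) (k : ℕ) :
    2 * ∑ j ∈ Finset.range k, (if j % 2 = 0 then c - 3 * (j : ℤ) else -(c - 3 * (j : ℤ))) =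
      if k % 2 = 0 then 3 * (k : ℤ) else 2 * c - 3 * ((k : ℤ) - 1) := by
  induction k with
  | zero => simp
  | succ k ih =>
    rw [Finset.sum_range_succ, mul_add, ih]
    push_cast
    split_ifs <;> omega

theorem sum_split_odd (g : ℕ → ℤ) (m : ℕ) :
    ∑ i ∈ Finset.range (2 * m + 1), g i =
      ∑ j ∈ Finset.range (m + 1), g (2 * j) + ∑ j ∈ Finset.range m, g (2 * j + 1) := by
  induction m with
  | zero => simp
  | succ m ih =>
    rw [show 2 * (m + 1) + 1 = 2 * m + 1 + 1 + 1 by ring, Finset.sum_range_succ,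
      Finset.sum_range_succ, ih, Finset.sum_range_succ _ (m + 1), Finset.sum_range_succ _ m,
      Finset.sum_range_succ (fun j => g (2 * j + 1)) m]
    rw [show 2 * (m + 1) = 2 * m + 1 + 1 by ring]
    ring

theorem sum_split_even (g : ℕ → ℤ) (m : ℕ) :
    ∑ i ∈ Finset.range (2 * m), g i =
      ∑ j ∈ Finset.range m, g (2 * j) + ∑ j ∈ Finset.range m, g (2 * j + 1) := by
  have h := sum_split_odd g m
  rw [Finset.sum_range_succ, Finset.sum_range_succ] at h
  linarith

/-- Middle block entries. -/
def blkB (m i : ℕ) : ℕ := (2 * m + 1) + (if i % 2 = 0 then m - i / 2 else 2 * m - i / 2)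

/-- Top block entries. -/
def blkC (m i : ℕ) : ℕ := 2 * (2 * m + 1) + (if i % 2 = 0 then 2 * m - i / 2 else m - 1 - i / 2)

theorem blk_facts (m i : ℕ) (hi : i ≤ 2 * m) :
    2 * m + 1 ≤ blkB m i ∧ blkB m i < 2 * (2 * m + 1) ∧ 2 * (2 * m + 1) ≤ blkC m i ∧
      blkC m i < 3 * (2 * m + 1) ∧ i + blkB m i + blkC m i = 9 * m + 3 := by
  unfold blkB blkC
  split_ifs <;> omega

theorem blk_inj (m i i' : ℕ) (hi : i ≤ 2 * m) (hi' : i' ≤ 2 * m) :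
    (blkB m i = blkB m i' → i = i') ∧ (blkC m i = blkC m i' → i = i') := by
  unfold blkB blkC
  split_ifs <;> omega

/-- The large odd case. -/
theorem odd_case (m : ℕ) (hm : 6 ≤ m) : chiLA (model (2 * m + 1)) = 3 := by
  set O : ℤ := ∑ j ∈ Finset.range m,
    (if j % 2 = 0 then (4 * m : ℤ) - 3 * (j : ℤ) else -((4 * m : ℤ) - 3 * (j : ℤ))) with hO
  have hO2 := alt_sum (4 * m) m
  rw [← hO] at hO2
  obtain ⟨ε, hε⟩ := signed_sum (m + 1) (by omega) (-1 - O)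
    (by rw [abs_le]; push_cast; split_ifs at hO2 <;> constructor <;> omega)
    (by split_ifs at hO2 <;> omega)
  set S : ℕ → Bool := fun i => if i % 2 = 0 then ε (m - i / 2) else decide (i / 2 % 2 = 1) with hS
  set M : Fin 3 → ℕ → ℕ := fun k i =>
    ![blkC m i + 3, if S i then blkB m i + 3 else i + 3, if S i then i + 3 else blkB m i + 3] k
    with hMdef
  have M0 : ∀ i, M 0 i = blkC m i + 3 := fun i => rfl
  have M1 : ∀ i, M 1 i = if S i then blkB m i + 3 else i + 3 := fun i => rfl
  have M2 : ∀ i, M 2 i = if S i then i + 3 else blkB m i + 3 := fun i => rfl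
  have hk : ∀ k : Fin 3, k = 0 ∨ k = 1 ∨ k = 2 := by decide
  have hdiff : ∑ i ∈ Finset.range (2 * m + 1), ((M 2 i : ℤ) - M 1 i) = -1 := by
    rw [sum_split_odd]
    have h1 : ∑ j ∈ Finset.range (m + 1), ((M 2 (2 * j) : ℤ) - M 1 (2 * j)) = -1 - O := by
      rw [← hε, ← Finset.sum_range_reflect]
      refine Finset.sum_congr rfl fun j hj => ?_
      have hj := Finset.mem_range.1 hj
      rw [M1, M2]
      have : S (2 * (m + 1 - 1 - j)) = ε j := by
        simp only [hS]
        rw [if_pos (by omega)]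
        congr 1; omega
      have hb : blkB m (2 * (m + 1 - 1 - j)) = 2 * m + 1 + j := by
        unfold blkB
        rw [if_pos (by omega)]
        omega
      rw [this, hb]
      split_ifs <;> omega
    have h2 : ∑ j ∈ Finset.range m, ((M 2 (2 * j + 1) : ℤ) - M 1 (2 * j + 1)) = O := by
      rw [hO]
      refine Finset.sum_congr rfl fun j hj => ?_
      have hj := Finset.mem_range.1 hj
      rw [M1, M2]
      have : S (2 * j + 1) = decide (j % 2 = 1) := by
        simp only [hS]
        rw [if_neg (by omega)]
        congr 2; omega
      have hb : blkB m (2 * j + 1) = 2 * m + 1 + (2 * m - j) := by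
        unfold blkB
        rw [if_neg (by omega)]
        omega
      rw [this, hb]
      simp only [decide_eq_true_eq]
      split_ifs <;> omega
    rw [h1, h2]; ring
  have hd : (∑ i ∈ Finset.range (2 * m + 1), M 2 i) + 1 = ∑ i ∈ Finset.range (2 * m + 1), M 1 i := by
    rw [Finset.sum_sub_distrib] at hdiff
    zify
    linarith
  have hcol : ∀ j < 2 * m + 1, M 0 j + M 1 j + M 2 j = 9 * m + 12 := by
    intro j hj
    have := blk_facts m j (by omega)
    rw [M0, M1, M2]
    split_ifs <;> omega
  have hlow0 : (2 * m + 1) * (4 * m + 5) ≤ ∑ i ∈ Finset.range (2 * m + 1), M 0 i := by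
    have := Finset.card_nsmul_le_sum (Finset.range (2 * m + 1)) (M 0) (4 * m + 5) (by
      intro j hj
      have hj := Finset.mem_range.1 hj
      have := blk_facts m j (by omega)
      rw [M0]; omega)
    simpa using this
  have h01 : ∑ i ∈ Finset.range (2 * m + 1), M 1 i ≤ ∑ i ∈ Finset.range (2 * m + 1), M 0 i := by
    refine Finset.sum_le_sum fun j hj => ?_
    have hj := Finset.mem_range.1 hj
    have := blk_facts m j (by omega)
    rw [M0, M1]
    split_ifs <;> omega
  have h12 : (2 * m + 1) * (3 * m + 7) ≤
      ∑ i ∈ Finset.range (2 * m + 1), M 1 i + ∑ i ∈ Finset.range (2 * m + 1), M 2 i := by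
    rw [← Finset.sum_add_distrib]
    have := Finset.card_nsmul_le_sum (Finset.range (2 * m + 1)) (fun i => M 1 i + M 2 i) (3 * m + 7) (by
      intro j hj
      have hj := Finset.mem_range.1 hj
      have := blk_facts m j (by omega)
      have := hcol j hj
      rw [M0] at this
      omega)
    simpa using this
  refine core (2 * m + 1) (by omega) M 1 2 (9 * m + 12) _ _ ?_ ?_ (by omega) hcol rfl ?_ rfl ?_ ?_ ?_
  · intro k k' j hj j' hj' h
    have f1 := blk_facts m j (by omega)
    have f2 := blk_facts m j' (by omega)
    have f3 := blk_inj m j j' (by omega) (by omega)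
    have hjj : j = j' := by
      rcases hk k with rfl | rfl | rfl <;> rcases hk k' with rfl | rfl | rfl <;>
        simp only [M0, M1, M2] at h <;> (try split_ifs at h) <;> omega
    subst hjj
    refine ⟨?_, rfl⟩
    rcases hk k with rfl | rfl | rfl <;> rcases hk k' with rfl | rfl | rfl <;>
      first
      | rfl
      | (exfalso; simp only [M0, M1, M2] at h; (try split_ifs at h) <;> omega)
  · intro k j hj
    have f1 := blk_facts m j (by omega)
    rcases hk k with rfl | rfl | rfl <;> simp only [M0, M1, M2] <;> (try split_ifs) <;> omega
  · omega
  · nlinarith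
  · nlinarith
  · omega

/-- The large even case. -/
theorem even_case (m : ℕ) (hm : 7 ≤ m) : chiLA (model (2 * m)) = 3 := by
  obtain ⟨n, rfl⟩ : ∃ n, m = n + 1 := ⟨m - 1, by omega⟩
  set m := n + 1 with hmn
  set O : ℤ := ∑ j ∈ Finset.range n,
    (if j % 2 = 0 then (4 * m : ℤ) - 3 * (j : ℤ) else -((4 * m : ℤ) - 3 * (j : ℤ))) with hO
  have hO2 := alt_sum (4 * m) n
  rw [← hO] at hO2
  obtain ⟨ε, hε⟩ := signed_sum m (by omega) (O - (2 * m + 1))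
    (by rw [abs_le]; split_ifs at hO2 <;> constructor <;> omega)
    (by split_ifs at hO2 <;> omega)
  set S : ℕ → Bool := fun i => if i % 2 = 0 then ε (m - i / 2) else decide (i / 2 % 2 = 0) with hS
  set M : Fin 3 → ℕ → ℕ := fun k i => if i = 2 * n then
      ![i + 1, blkC m (i + 1), blkB m (i + 1)] k else
    ![blkC m (i + 1), if S (i + 1) then blkB m (i + 1) else i + 1,
      if S (i + 1) then i + 1 else blkB m (i + 1)] k
    with hMdef
  have M0 : ∀ i, M 0 i = if i = 2 * n then i + 1 else blkC m (i + 1) := fun i => rfl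
  have M1 : ∀ i, M 1 i = if i = 2 * n then blkC m (i + 1) else
    if S (i + 1) then blkB m (i + 1) else i + 1 := fun i => rfl
  have M2 : ∀ i, M 2 i = if i = 2 * n then blkB m (i + 1) else
    if S (i + 1) then i + 1 else blkB m (i + 1) := fun i => rfl
  have hk : ∀ k : Fin 3, k = 0 ∨ k = 1 ∨ k = 2 := by decide
  have hdiff : ∑ i ∈ Finset.range (2 * m), ((M 2 i : ℤ) - M 1 i) = -(3 * m + 1) := by
    rw [sum_split_even]
    have h1 : ∑ j ∈ Finset.range m, ((M 2 (2 * j + 1) : ℤ) - M 1 (2 * j + 1))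
        = O - (2 * m + 1) := by
      rw [← hε, ← Finset.sum_range_reflect]
      refine Finset.sum_congr rfl fun j hj => ?_
      have hj := Finset.mem_range.1 hj
      rw [M1, M2]
      have : S (2 * (m - 1 - j) + 1 + 1) = ε j := by
        simp only [hS]
        rw [if_pos (by omega)]
        congr 1; omega
      have hb : blkB m (2 * (m - 1 - j) + 1 + 1) = 2 * m + 1 + j := by
        unfold blkB
        rw [if_pos (by omega)]
        omega
      have hne : ¬ (2 * (m - 1 - j) + 1 = 2 * n) := by omega
      rw [this, hb, if_neg hne, if_neg hne]
      split_ifs <;> omega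
    have h2 : ∑ j ∈ Finset.range m, ((M 2 (2 * j) : ℤ) - M 1 (2 * j)) = -O - m := by
      rw [hmn, Finset.sum_range_succ, ← hmn]
      have h3 : (M 2 (2 * n) : ℤ) - M 1 (2 * n) = -m := by
        rw [M1, M2, if_pos rfl, if_pos rfl]
        unfold blkB blkC
        rw [if_neg (by omega), if_neg (by omega)]
        omega
      rw [h3, hO, ← Finset.sum_neg_distrib, sub_eq_add_neg]
      congr 1
      refine Finset.sum_congr rfl fun j hj => ?_
      have hj := Finset.mem_range.1 hj
      rw [M1, M2]
      have : S (2 * j + 1) = decide (j % 2 = 0) := by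
        simp only [hS]
        rw [if_neg (by omega)]
        congr 2; omega
      have hb : blkB m (2 * j + 1) = 2 * m + 1 + (2 * m - j) := by
        unfold blkB
        rw [if_neg (by omega)]
        omega
      have hne : ¬ (2 * j = 2 * n) := by omega
      rw [this, hb, if_neg hne, if_neg hne]
      simp only [decide_eq_true_eq]
      split_ifs <;> omega
    rw [h1, h2]; ring
  have hd : (∑ i ∈ Finset.range (2 * m), M 2 i) + (3 * m + 1) = ∑ i ∈ Finset.range (2 * m), M 1 i := by
    rw [Finset.sum_sub_distrib] at hdiff
    zify
    linarith
  have hcol : ∀ j < 2 * m, M 0 j + M 1 j + M 2 j = 9 * m + 3 := by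
    intro j hj
    have := blk_facts m (j + 1) (by omega)
    rw [M0, M1, M2]
    split_ifs <;> omega
  have hCn : blkC m (2 * n + 1) = 4 * m + 2 := by
    unfold blkC
    rw [if_neg (by omega)]
    omega
  have hsp : ∑ i ∈ Finset.range (2 * m), (if i = 2 * n then 4 * m + 2 else 0) = 4 * m + 2 := by
    rw [Finset.sum_ite_eq' (Finset.range (2 * m)) (2 * n), if_pos (Finset.mem_range.2 (by omega))]
  have hlow0 : (2 * m) * (4 * m + 2) ≤ ∑ i ∈ Finset.range (2 * m), M 0 i + (4 * m + 2) := by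
    rw [← hsp, ← Finset.sum_add_distrib, hsp]
    have := Finset.card_nsmul_le_sum (Finset.range (2 * m))
      (fun i => M 0 i + (if i = 2 * n then 4 * m + 2 else 0)) (4 * m + 2) (by
      intro j hj
      have hj := Finset.mem_range.1 hj
      have := blk_facts m (j + 1) (by omega)
      simp only [M0]; split_ifs <;> omega)
    simpa using this
  have h01 : ∑ i ∈ Finset.range (2 * m), M 1 i ≤
      ∑ i ∈ Finset.range (2 * m), M 0 i + (4 * m + 2) := by
    rw [← hsp, ← Finset.sum_add_distrib]
    refine Finset.sum_le_sum fun j hj => ?_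
    have hj := Finset.mem_range.1 hj
    have := blk_facts m (j + 1) (by omega)
    rw [M0, M1]
    split_ifs with h
    · subst h; omega
    all_goals omega
  have h12 : (2 * m) * (3 * m + 1) ≤
      ∑ i ∈ Finset.range (2 * m), M 1 i + ∑ i ∈ Finset.range (2 * m), M 2 i := by
    rw [← Finset.sum_add_distrib]
    have := Finset.card_nsmul_le_sum (Finset.range (2 * m)) (fun i => M 1 i + M 2 i) (3 * m + 1) (by
      intro j hj
      have hj := Finset.mem_range.1 hj
      have := blk_facts m (j + 1) (by omega)
      have := hcol j hj
      rw [M0] at this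
      split_ifs at this <;> omega)
    simpa using this
  have b0 : blkB m 0 = 3 * m + 1 := by unfold blkB; simp; omega
  have c0 : blkC m 0 = 6 * m + 2 := by unfold blkC; simp; omega
  refine core (2 * m) (by omega) M (3 * m + 1) (6 * m + 2) (9 * m + 3) _ _ ?_ ?_ (by omega)
    hcol rfl ?_ rfl ?_ ?_ ?_
  · intro k k' j hj j' hj' h
    have f1 := blk_facts m (j + 1) (by omega)
    have f2 := blk_facts m (j' + 1) (by omega)
    have f3 := blk_inj m (j + 1) (j' + 1) (by omega) (by omega)
    have hjj : j = j' := by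
      rcases hk k with rfl | rfl | rfl <;> rcases hk k' with rfl | rfl | rfl <;>
        simp only [M0, M1, M2] at h <;> (try split_ifs at h) <;> omega
    subst hjj
    refine ⟨?_, rfl⟩
    rcases hk k with rfl | rfl | rfl <;> rcases hk k' with rfl | rfl | rfl <;>
      first
      | rfl
      | (exfalso; simp only [M0, M1, M2] at h; (try split_ifs at h) <;> omega)
  · intro k j hj
    have f1 := blk_facts m (j + 1) (by omega)
    have f3 := blk_inj m (j + 1) 0 (by omega) (by omega)
    rw [b0, c0] at f3
    rcases hk k with rfl | rfl | rfl <;> simp only [M0, M1, M2] <;> (try split_ifs) <;> omega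
  · omega
  · have : 7 * m ≤ m * m := Nat.mul_le_mul_right m hm
    nlinarith
  · have : 7 * m ≤ m * m := Nat.mul_le_mul_right m hm
    nlinarith
  · omega

theorem chiLA_K12r (r : ℕ) (hr : 2 ≤ r) :
    chiLA (SimpleGraph.completeMultipartiteGraph ![Fin 1, Fin 2, Fin r]) = 3 := by
  rw [chiLA_eq_model]
  rcases le_or_gt r 12 with h | h
  · exact small_cases r hr h
  · rcases Nat.even_or_odd' r with ⟨m, rfl | rfl⟩
    · exact even_case m (by omega)
    · exact odd_case m (by omega)
end

section
/- Let G be a connected graph of order m ≥ 3 and size e with χ(G) = χ_la(G), and let n ≥ 4 satisfy m ≡ n (mod 2) and m ≥ n²/2. Then χ_la(G ∨ O_n) = χ_la(G) + 1. -/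
open scoped BigOperators

def Arr (p q : ℕ) (S : Set ℕ) : Prop :=
  ∃ a : Fin p → Fin q → ℤ, (∀ i, ∑ j, a i j = 0) ∧ (∀ j, ∑ i, a i j = 0) ∧
    (∀ i j i' j', a i j = a i' j' → i = i' ∧ j = j') ∧ ∀ i j, (a i j).natAbs ∈ S

def Fam (k w : ℕ) (S : Set ℕ) : Prop :=
  ∃ v : ℕ → Fin w → ℤ, (∀ i < k, ∑ j, v i j = 0) ∧ (∀ i < k, ∀ j, v i j ≠ 0) ∧
    (∀ i < k, ∀ i' < k, ∀ j j', (v i j).natAbs = (v i' j').natAbs → i = i' ∧ j = j') ∧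
    ∀ i < k, ∀ j, (v i j).natAbs ∈ S

theorem Arr.mono {p q S S'} (h : Arr p q S) (hS : S ⊆ S') : Arr p q S' := by
  obtain ⟨a, h1, h2, h3, h4⟩ := h
  exact ⟨a, h1, h2, h3, fun i j => hS (h4 i j)⟩

theorem Arr.tr {p q S} (h : Arr p q S) : Arr q p S := by
  obtain ⟨a, h1, h2, h3, h4⟩ := h
  exact ⟨fun i j => a j i, h2, h1, fun i j i' j' e => (h3 _ _ _ _ e).symm, fun i j => h4 j i⟩

theorem Arr.hcomp {p q q' S S'} (h : Arr p q S) (h' : Arr p q' S') (hd : Disjoint S S') :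
    Arr p (q + q') (S ∪ S') := by
  obtain ⟨a, h1, h2, h3, h4⟩ := h
  obtain ⟨b, g1, g2, g3, g4⟩ := h'
  have key : ∀ i j i' j', a i j ≠ b i' j' := by
    intro i j i' j' e
    have := h4 i j
    rw [e] at this
    exact Set.disjoint_left.1 hd this (g4 i' j')
  refine ⟨fun i => Fin.append (a i) (b i), ?_, ?_, ?_, ?_⟩
  · intro i
    rw [Fin.sum_univ_add]
    simp [h1, g1]
  · intro j
    refine Fin.addCases (fun j => ?_) (fun j => ?_) j
    · simp [h2]
    · simp [g2]
  · intro i j i' j'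
    refine Fin.addCases (fun j => ?_) (fun j => ?_) j <;>
    refine Fin.addCases (fun j' => ?_) (fun j' => ?_) j' <;>
    simp only [Fin.append_left, Fin.append_right]
    · intro e
      obtain ⟨e1, e2⟩ := h3 _ _ _ _ e
      exact ⟨e1, by rw [e2]⟩
    · intro e
      exact absurd e (key _ _ _ _)
    · intro e
      exact absurd e.symm (key _ _ _ _)
    · intro e
      obtain ⟨e1, e2⟩ := g3 _ _ _ _ e
      exact ⟨e1, by rw [e2]⟩
  · intro i j
    refine Fin.addCases (fun j => ?_) (fun j => ?_) j
    · simp only [Fin.append_left]; exact Or.inl (h4 _ _)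
    · simp only [Fin.append_right]; exact Or.inr (g4 _ _)

theorem Arr.vcomp {p p' q S S'} (h : Arr p q S) (h' : Arr p' q S') (hd : Disjoint S S') :
    Arr (p + p') q (S ∪ S') :=
  (h.tr.hcomp h'.tr hd).tr

theorem Fam.mono {p q S S'} (h : Fam p q S) (hS : S ⊆ S') : Fam p q S' := by
  obtain ⟨a, h1, h2, h3, h4⟩ := h
  exact ⟨a, h1, h2, h3, fun i hi j => hS (h4 i hi j)⟩

theorem Fam.split {k l w S} (h : Fam (k + l) w S) :
    ∃ S1 S2, Disjoint S1 S2 ∧ S1 ∪ S2 ⊆ S ∧ Fam k w S1 ∧ Fam l w S2 := by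
  obtain ⟨v, h1, h2, h3, h4⟩ := h
  refine ⟨{x | ∃ i < k, ∃ j, x = (v i j).natAbs}, {x | ∃ i < l, ∃ j, x = (v (k + i) j).natAbs},
    ?_, ?_, ?_, ?_⟩
  · rw [Set.disjoint_left]
    rintro x ⟨i, hi, j, rfl⟩ ⟨i', hi', j', e⟩
    have := (h3 _ (by omega) _ (by omega) _ _ e).1
    omega
  · rintro x (⟨i, hi, j, rfl⟩ | ⟨i, hi, j, rfl⟩)
    · exact h4 _ (by omega) _
    · exact h4 _ (by omega) _
  · refine ⟨v, fun i hi => h1 i (by omega), fun i hi => h2 i (by omega),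
      fun i hi i' hi' => h3 i (by omega) i' (by omega), fun i hi j => ⟨i, hi, j, rfl⟩⟩
  · refine ⟨fun i => v (k + i), fun i hi => h1 _ (by omega), fun i hi => h2 _ (by omega),
      fun i hi i' hi' j j' e => ?_, fun i hi j => ⟨i, hi, j, rfl⟩⟩
    have := h3 _ (by omega) _ (by omega) _ _ e
    exact ⟨by omega, this.2⟩

theorem Fam.union {k l w S S'} (h : Fam k w S) (h' : Fam l w S') (hd : Disjoint S S') :
    Fam (k + l) w (S ∪ S') := by
  obtain ⟨v, h1, h2, h3, h4⟩ := h
  obtain ⟨u, g1, g2, g3, g4⟩ := h'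
  refine ⟨fun i => if i < k then v i else u (i - k), ?_, ?_, ?_, ?_⟩
  · intro i hi
    by_cases c : i < k
    · simp [c, h1]
    · simp only [c, if_false]; exact g1 _ (by omega)
  · intro i hi j
    by_cases c : i < k
    · simp only [c, if_true]; exact h2 _ c _
    · simp only [c, if_false]; exact g2 _ (by omega) _
  · intro i hi i' hi' j j'
    by_cases c : i < k <;> by_cases c' : i' < k <;> simp only [c, c', if_true, if_false]
    · exact h3 _ c _ c' _ _
    · intro e
      have := h4 i c j
      rw [e] at this
      exact absurd (g4 _ (by omega) _) (Set.disjoint_left.1 hd this)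
    · intro e
      have := h4 i' c' j'
      rw [← e] at this
      exact absurd (g4 _ (by omega) _) (Set.disjoint_left.1 hd this)
    · intro e
      have := g3 _ (by omega) _ (by omega) _ _ e
      exact ⟨by omega, this.2⟩
  · intro i hi j
    by_cases c : i < k
    · simp only [c, if_true]; exact Or.inl (h4 _ c _)
    · simp only [c, if_false]; exact Or.inr (g4 _ (by omega) _)

theorem Fam.block {k l w S p q} (h : Fam (k * l) w S) (hp : p = k * w) (hq : q = l * 2) :
    Arr p q S := by
  subst hp hq
  obtain ⟨v, h1, h2, h3, h4⟩ := h
  let E := @finProdFinEquiv k w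
  let F := @finProdFinEquiv l 2
  let J := @finProdFinEquiv k l
  let ε : Fin 2 → ℤ := ![1, -1]
  have hε : ∀ s, (ε s).natAbs = 1 := by intro s; fin_cases s <;> rfl
  refine ⟨fun x y => ε (F.symm y).2 * v (J ((E.symm x).1, (F.symm y).1)) (E.symm x).2,
    ?_, ?_, ?_, ?_⟩
  · intro x
    rw [← Equiv.sum_comp F, Fintype.sum_prod_type]
    simp [ε, Fin.sum_univ_two]
  · intro y
    rw [← Equiv.sum_comp E, Fintype.sum_prod_type]
    simp only [Equiv.symm_apply_apply, ← Finset.mul_sum]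
    rw [Finset.sum_eq_zero, mul_zero]
    intro i _
    exact h1 _ (Fin.is_lt _)
  · intro x y x' y'
    obtain ⟨⟨a, b⟩, rfl⟩ := E.surjective x
    obtain ⟨⟨a', b'⟩, rfl⟩ := E.surjective x'
    obtain ⟨⟨c, d⟩, rfl⟩ := F.surjective y
    obtain ⟨⟨c', d'⟩, rfl⟩ := F.surjective y'
    simp only [Equiv.symm_apply_apply]
    intro e
    have e' := congrArg Int.natAbs e
    rw [Int.natAbs_mul, Int.natAbs_mul, hε, hε, one_mul, one_mul] at e'
    obtain ⟨e1, e2⟩ := h3 _ (Fin.is_lt _) _ (Fin.is_lt _) _ _ e'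
    have e3 := J.injective (Fin.ext e1)
    simp only [Prod.mk.injEq] at e3
    obtain ⟨rfl, rfl⟩ := e3
    subst e2
    have e4 := mul_right_cancel₀ (h2 _ (Fin.is_lt _) _) e
    have : d = d' := by
      revert e4; fin_cases d <;> fin_cases d' <;> simp [ε]
    subst this
    exact ⟨rfl, rfl⟩
  · intro x y
    rw [Int.natAbs_mul, hε, one_mul]
    exact h4 _ (Fin.is_lt _) _

theorem evenArr_even {μ ν : ℕ} {S : Set ℕ} (hD : μ * ν % 2 = 0)
    (h : Fam (μ * ν / 2) 4 S) : Arr (2 * μ) (2 * ν) S := by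
  rcases Nat.even_or_odd' μ with ⟨α, rfl | rfl⟩
  · have : 2 * α * ν / 2 = α * ν := by rw [mul_assoc]; omega
    rw [this] at h
    exact h.block (by ring) (by ring)
  · rcases Nat.even_or_odd' ν with ⟨β, rfl | rfl⟩
    · have : (2 * α + 1) * (2 * β) / 2 = β * (2 * α + 1) := by
        rw [show (2 * α + 1) * (2 * β) = 2 * (β * (2 * α + 1)) by ring]; omega
      rw [this] at h
      exact (h.block (by ring) (by ring) : Arr (2 * (2 * β)) (2 * (2 * α + 1)) S).tr
    · exfalso
      rw [show (2 * α + 1) * (2 * β + 1) = 2 * (2 * α * β + α + β) + 1 by ring] at hD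
      omega

theorem evenArr_odd {μ ν : ℕ} {S S' : Set ℕ} (hμ : 3 ≤ μ) (hD : μ * ν % 2 = 1)
    (h : Fam ((μ * ν - 3) / 2) 4 S) (h' : Fam 1 6 S') (hd : Disjoint S' S) :
    Arr (2 * μ) (2 * ν) (S' ∪ S) := by
  have h1 : μ % 2 = 1 := by
    rcases Nat.mod_two_eq_zero_or_one μ with h | h
    · rw [Nat.mul_mod, h] at hD; simp at hD
    · exact h
  have h2 : ν % 2 = 1 := by
    rcases Nat.mod_two_eq_zero_or_one ν with h | h
    · rw [Nat.mul_mod, h] at hD; simp at hD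
    · exact h
  obtain ⟨α, rfl⟩ : ∃ α, μ = 2 * α + 3 := ⟨(μ - 3) / 2, by omega⟩
  obtain ⟨β, rfl⟩ : ∃ β, ν = 2 * β + 1 := ⟨ν / 2, by omega⟩
  have : ((2 * α + 3) * (2 * β + 1) - 3) / 2 = α + β * (2 * α + 3) := by
    rw [show (2 * α + 3) * (2 * β + 1) = 2 * (α + β * (2 * α + 3)) + 3 by ring]; omega
  rw [this] at h
  obtain ⟨S1, S2, d12, hs, f1, f2⟩ := h.split
  have a1 : Arr 6 2 S' := Fam.block (k := 1) (l := 1) (by simpa using h') rfl rfl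
  have a2 : Arr (4 * α) 2 S1 := Fam.block (k := α) (l := 1) (by simpa using f1) (by ring) rfl
  have a3 : Arr (4 * β) (2 * (2 * α + 3)) S2 := Fam.block f2 (by ring) (by ring)
  have hs1 : S1 ⊆ S := fun x hx => hs (Or.inl hx)
  have hs2 : S2 ⊆ S := fun x hx => hs (Or.inr hx)
  have b1 := a1.vcomp a2 (hd.mono_right hs1)
  rw [show 6 + 4 * α = 2 * (2 * α + 3) by ring] at b1
  have b2 := b1.hcomp a3.tr (by
    rw [Set.disjoint_union_left]; exact ⟨hd.mono_right hs2, d12⟩)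
  rw [show 2 + 4 * β = 2 * (2 * β + 1) by ring] at b2
  refine b2.mono ?_
  rw [Set.union_assoc]
  exact Set.union_subset_union_right _ hs

theorem oddArr {μ ν : ℕ} {C S1 S2 : Set ℕ} (hC : Arr 3 3 C) (hT : Fam (μ + ν) 3 S1)
    (hE : Arr (2 * μ) (2 * ν) S2) (d1 : Disjoint C S1) (d2 : Disjoint C S2)
    (d3 : Disjoint S1 S2) : Arr (2 * μ + 3) (2 * ν + 3) (C ∪ S1 ∪ S2) := by
  obtain ⟨U, W, dd, hs, f1, f2⟩ := hT.split
  have hU : U ⊆ S1 := fun x hx => hs (Or.inl hx)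
  have hW : W ⊆ S1 := fun x hx => hs (Or.inr hx)
  have a1 : Arr 3 (2 * μ) U := Fam.block (k := 1) (l := μ) (by simpa using f1) rfl (by ring)
  have a2 : Arr 3 (2 * ν) W := Fam.block (k := 1) (l := ν) (by simpa using f2) rfl (by ring)
  have top := a2.hcomp hC (d1.mono_right hW).symm
  have bot := hE.hcomp a1.tr (d3.mono_left hU).symm
  have := bot.vcomp top (by
    simp only [Set.disjoint_union_left, Set.disjoint_union_right]
    exact ⟨⟨(d3.mono_left hW).symm, dd⟩, ⟨d2.symm, (d1.mono_right hU).symm⟩⟩)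
  refine this.mono ?_
  rintro x ((h | h) | (h | h))
  · exact Or.inr h
  · exact Or.inl (Or.inr (hU h))
  · exact Or.inl (Or.inr (hW h))
  · exact Or.inl (Or.inl h)

/-- pairs `{f i, f i + d}` -/
def PairFam (d k : ℕ) (S : Set ℕ) : Prop :=
  ∃ f : ℕ → ℕ, (∀ i < k, 0 < f i ∧ f i ∈ S ∧ f i + d ∈ S) ∧
    ∀ i < k, ∀ i' < k, (f i = f i' → i = i') ∧ f i ≠ f i' + d

theorem PairFam.quad {d k S} (hd : 0 < d) (h : PairFam d k S) (hk : k % 2 = 0) :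
    Fam (k / 2) 4 S := by
  obtain ⟨f, h1, h2⟩ := h
  refine ⟨fun i => ![(f (2 * i) : ℤ), -(f (2 * i) + d), -f (2 * i + 1), f (2 * i + 1) + d],
    ?_, ?_, ?_, ?_⟩
  · intro i hi
    simp [Fin.sum_univ_four]
  · intro i hi j
    have := (h1 (2 * i) (by omega)).1
    have := (h1 (2 * i + 1) (by omega)).1
    fin_cases j <;> simp <;> omega
  · intro i hi i' hi' j j' e
    have p1 := h2 (2 * i) (by omega) (2 * i') (by omega)
    have p2 := h2 (2 * i + 1) (by omega) (2 * i') (by omega)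
    have p3 := h2 (2 * i) (by omega) (2 * i' + 1) (by omega)
    have p4 := h2 (2 * i + 1) (by omega) (2 * i' + 1) (by omega)
    have q1 := h2 (2 * i') (by omega) (2 * i) (by omega)
    have q2 := h2 (2 * i' + 1) (by omega) (2 * i) (by omega)
    have q3 := h2 (2 * i') (by omega) (2 * i + 1) (by omega)
    have q4 := h2 (2 * i' + 1) (by omega) (2 * i + 1) (by omega)
    fin_cases j <;> fin_cases j' <;> simp at e ⊢ <;> omega
  · intro i hi j
    have a := (h1 (2 * i) (by omega)).2
    have b := (h1 (2 * i + 1) (by omega)).2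
    fin_cases j <;> simp
    · exact a.1
    · rw [show (-(d:ℤ) + -(f (2 * i) : ℤ)).natAbs = f (2 * i) + d by omega]; exact a.2
    · exact b.1
    · rw [show ((f (2 * i + 1) : ℤ) + (d:ℤ)).natAbs = f (2 * i + 1) + d by omega]; exact b.2

theorem PairFam.union {d k l S S'} (h : PairFam d k S) (h' : PairFam d l S')
    (hd : Disjoint S S') : PairFam d (k + l) (S ∪ S') := by
  obtain ⟨v, h1, h2⟩ := h
  obtain ⟨u, g1, g2⟩ := h'
  rw [Set.disjoint_left] at hd
  refine ⟨fun i => if i < k then v i else u (i - k), ?_, ?_⟩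
  · intro i hi
    by_cases c : i < k
    · simp only [c, if_true]
      have := h1 i c
      exact ⟨this.1, Or.inl this.2.1, Or.inl this.2.2⟩
    · simp only [c, if_false]
      have := g1 (i - k) (by omega)
      exact ⟨this.1, Or.inr this.2.1, Or.inr this.2.2⟩
  · intro i hi i' hi'
    by_cases c : i < k <;> by_cases c' : i' < k <;> simp only [c, c', if_true, if_false]
    · exact h2 _ c _ c'
    · have a := h1 i c
      have b := g1 (i' - k) (by omega)
      exact ⟨fun e => absurd (e ▸ b.2.1) (hd a.2.1), fun e => absurd (e ▸ b.2.2) (hd a.2.1)⟩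
    · have a := h1 i' c'
      have b := g1 (i - k) (by omega)
      exact ⟨fun e => absurd (e ▸ b.2.1) (hd a.2.1), fun e => absurd (e ▸ b.2.1) (hd a.2.2)⟩
    · have := g2 (i - k) (by omega) (i' - k) (by omega)
      exact ⟨fun e => by have := this.1 e; omega, this.2⟩

/-- arithmetic progression of pairs, step `2 d` -/
theorem PairFam.ap {d : ℕ} (hd : 0 < d) (s k : ℕ) (hs : 0 < s) :
    PairFam d k {x | ∃ t, x = s + d * t ∧ t < 2 * k} := by
  refine ⟨fun i => s + d * (2 * i), fun i hi => ⟨Nat.add_pos_left hs _, ⟨2 * i, rfl, by omega⟩,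
    ⟨2 * i + 1, by ring, by omega⟩⟩, fun i hi i' hi' => ⟨fun e => ?_, fun e => ?_⟩⟩
  · have := Nat.eq_of_mul_eq_mul_left hd (Nat.add_left_cancel e)
    omega
  · have : d * (2 * i) = d * (2 * i' + 1) := by linarith
    have := Nat.eq_of_mul_eq_mul_left hd this
    omega

theorem PairFam.ap2 (s k : ℕ) (hs : 0 < s) (S : Set ℕ)
    (h : ∀ t < 2 * k, s + 2 * t ∈ S) : PairFam 2 k S := by
  obtain ⟨f, h1, h2⟩ := PairFam.ap (d := 2) (by norm_num) s k hs
  refine ⟨f, fun i hi => ?_, h2⟩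
  obtain ⟨a, ⟨t, e, ht⟩, ⟨t', e', ht'⟩⟩ := h1 i hi
  exact ⟨a, e ▸ h t ht, e' ▸ h t' ht'⟩

theorem PairFam.ap1 (s k : ℕ) (hs : 0 < s) (S : Set ℕ)
    (h : ∀ t < 2 * k, s + t ∈ S) : PairFam 1 k S := by
  obtain ⟨f, h1, h2⟩ := PairFam.ap (d := 1) (by norm_num) s k hs
  refine ⟨f, fun i hi => ?_, h2⟩
  obtain ⟨a, ⟨t, e, ht⟩, ⟨t', e', ht'⟩⟩ := h1 i hi
  rw [one_mul] at e e'
  exact ⟨a, e ▸ h t ht, e' ▸ h t' ht'⟩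

def trS (b c T : ℕ) : Set ℕ :=
  {x | (b ≤ x ∧ x < b + 2 * T ∧ x % 2 = 1) ∨ (c < x + T ∧ x ≤ c) ∨ (c + b ≤ x ∧ x < c + b + T)}

theorem trip_fam (b c T : ℕ) (hb : b % 2 = 1) (h : b + 3 * T ≤ c + 2) : Fam T 3 (trS b c T) := by
  refine ⟨fun i => ![(b + 2 * i : ℤ), c - i, -(c + b + i)], ?_, ?_, ?_, ?_⟩
  · intro i hi
    simp [Fin.sum_univ_three]; ring
  · intro i hi j
    fin_cases j <;> simp <;> omega
  · intro i hi i' hi' j j' e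
    fin_cases j <;> fin_cases j' <;> simp at e ⊢ <;> omega
  · intro i hi j
    simp only [trS, Set.mem_ofPred_eq]
    fin_cases j <;> simp <;> omega

theorem core_A : Arr 3 3 {x | x ≤ 4} :=
  ⟨![![-3, 4, -1], ![2, 0, -2], ![1, -4, 3]], by decide, by decide, by decide, by
    intro i j; simp only [Set.mem_ofPred_eq]; revert i j; decide⟩

theorem core_B : Arr 3 3 {x | x ≤ 3 ∨ x = 5} :=
  ⟨![![2, 1, -3], ![-5, 0, 5], ![3, -1, -2]], by decide, by decide, by decide, by
    intro i j; simp only [Set.mem_ofPred_eq]; revert i j; decide⟩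

theorem six_fam (e c : ℕ) (he : 0 < e) (h : e + 2 ≤ c) :
    Fam 1 6 {x | x = e ∨ x = e + 2 ∨ (c < x ∧ x < c + 5)} := by
  refine ⟨fun i => ![(e + 2 : ℤ), -e, c + 1, -(c + 2), c + 3, -(c + 4)], ?_, ?_, ?_, ?_⟩
  · intro i hi
    simp [Fin.sum_univ_six]; ring
  · intro i hi j
    fin_cases j <;> simp <;> omega
  · intro i hi i' hi' j j' e
    refine ⟨by omega, ?_⟩
    fin_cases j <;> fin_cases j' <;> simp at e ⊢ <;> omega
  · intro i hi j
    simp only [Set.mem_ofPred_eq]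
    fin_cases j <;> simp <;> omega

theorem quad_even (b e P s l c D : ℕ) (hb : b % 2 = 1) (hb5 : 5 ≤ b) (he : 0 < e) (hs : 0 < s)
    (h1 : e + 4 * P ≤ s + 1) (hes : e % 2 = 0)  (h2 : s + 2 * l ≤ c + 1)
    (hP : P % 2 = 0) (hl : (l + (b - 1) / 2) % 2 = 0) (hD : P / 2 + (l + (b - 1) / 2) / 2 = D) :
    Fam D 4 ({x | e ≤ x ∧ x < e + 4 * P ∧ x % 2 = 0} ∪
      ({x | s ≤ x ∧ x < s + 2 * l} ∪ {x | c < x ∧ x < c + b})) := by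
  have f1 : PairFam 2 P {x | e ≤ x ∧ x < e + 4 * P ∧ x % 2 = 0} :=
    PairFam.ap2 e P he _ (by intro t ht; simp only [Set.mem_ofPred_eq]; omega)
  have f2 : PairFam 1 l {x | s ≤ x ∧ x < s + 2 * l} :=
    PairFam.ap1 s l hs _ (by intro t ht; simp only [Set.mem_ofPred_eq]; omega)
  have f3 : PairFam 1 ((b - 1) / 2) {x | c < x ∧ x < c + b} :=
    PairFam.ap1 (c + 1) _ (by omega) _ (by intro t ht; simp only [Set.mem_ofPred_eq]; omega)
  have f4 := f2.union f3 (by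
    rw [Set.disjoint_left]; intro x; simp only [Set.mem_ofPred_eq]; omega)
  have g := (f1.quad (by norm_num) hP).union (f4.quad (by norm_num) hl) (by
    rw [Set.disjoint_left]; intro x; simp only [Set.mem_ofPred_eq, Set.mem_union]; omega)
  rwa [hD] at g

theorem quad_odd (b e P s l c D : ℕ) (hb : b % 2 = 1) (hb5 : 5 ≤ b) (he : 0 < e) (hs : 0 < s)
    (h1 : e + 4 * P ≤ s + 1) (hes : e % 2 = 0)  (h2 : s + 2 * l ≤ c + 1)
    (hP : P % 2 = 1) (hl : (l + (b - 1) / 2) % 2 = 0)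
    (hD : (P - 1) / 2 + (l + (b - 5) / 2) / 2 = D) :
    Fam D 4 ({x | e + 4 ≤ x ∧ x < e + 4 * P ∧ x % 2 = 0} ∪
      ({x | s ≤ x ∧ x < s + 2 * l} ∪ {x | c + 4 < x ∧ x < c + b})) := by
  have f1 : PairFam 2 (P - 1) {x | e + 4 ≤ x ∧ x < e + 4 * P ∧ x % 2 = 0} :=
    PairFam.ap2 (e + 4) _ (by omega) _ (by intro t ht; simp only [Set.mem_ofPred_eq]; omega)
  have f2 : PairFam 1 l {x | s ≤ x ∧ x < s + 2 * l} :=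
    PairFam.ap1 s l hs _ (by intro t ht; simp only [Set.mem_ofPred_eq]; omega)
  have f3 : PairFam 1 ((b - 5) / 2) {x | c + 4 < x ∧ x < c + b} :=
    PairFam.ap1 (c + 5) _ (by omega) _ (by intro t ht; simp only [Set.mem_ofPred_eq]; omega)
  have f4 := f2.union f3 (by
    rw [Set.disjoint_left]; intro x; simp only [Set.mem_ofPred_eq]; omega)
  have g := (f1.quad (by norm_num) (by omega)).union (f4.quad (by norm_num) (by omega)) (by
    rw [Set.disjoint_left]; intro x; simp only [Set.mem_ofPred_eq, Set.mem_union]; omega)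
  rwa [hD] at g

set_option maxHeartbeats 8000000 in
theorem oddRect_gen (μ ν b e P : ℕ) (C : Set ℕ) (hC : Arr 3 3 C) (hμ : 3 ≤ μ)
    (hb : (b = 5 ∧ e = 6 ∧ P = (μ + ν) / 2 ∧ C = {x | x ≤ 4}) ∨
      (b = 7 ∧ e = 4 ∧ P = (μ + ν) / 2 + 1 ∧ C = {x | x ≤ 3 ∨ x = 5}))
    (hP : (P + μ * ν) % 2 = 0) (hodd : μ * ν % 2 = 1 → (μ + ν) % 2 = 0)
    (hsp : (μ + ν) + 2 * b ≤ 2 * (μ * ν) + 6 + (μ + ν) % 2) :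
    Arr (2 * μ + 3) (2 * ν + 3) {x | x ≤ 2 * (μ * ν) + 3 * (μ + ν) + 4} := by
  set T := μ + ν with hT
  set D := μ * ν with hDd
  obtain ⟨s, hs⟩ : ∃ s, s = b + 2 * T - T % 2 := ⟨_, rfl⟩
  obtain ⟨c, hc⟩ : ∃ c, c = 2 * D + 3 * T + 4 + 1 - T - b := ⟨_, rfl⟩
  obtain ⟨l, hl⟩ : ∃ l, l = (c + 1 - T - s) / 2 := ⟨_, rfl⟩
  have hl2 : 2 * l = c + 1 - T - s := by omega
  have ftr : Fam T 3 (trS b c T) := trip_fam b c T (by omega) (by omega)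
  rcases Nat.mod_two_eq_zero_or_one D with hD | hD
  · have q := quad_even b e P s l c (D / 2) (by omega) (by omega) (by omega) (by omega) (by omega)
      (by omega) (by omega) (by omega) (by omega) (by omega)
    have E := evenArr_even hD q
    have := oddArr hC ftr E (by
        rw [Set.disjoint_left]; intro x
        rcases hb with ⟨h1, h2, h3, rfl⟩ | ⟨h1, h2, h3, rfl⟩ <;>
        simp only [Set.mem_ofPred_eq, Set.mem_union, trS] <;> omega) (by
        rw [Set.disjoint_left]; intro x
        rcases hb with ⟨h1, h2, h3, rfl⟩ | ⟨h1, h2, h3, rfl⟩ <;>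
        simp only [Set.mem_ofPred_eq, Set.mem_union, trS] <;> omega) (by
        rw [Set.disjoint_left]; intro x
        simp only [Set.mem_ofPred_eq, Set.mem_union, trS]; omega)
    refine this.mono ?_
    intro x
    rcases hb with ⟨h1, h2, h3, rfl⟩ | ⟨h1, h2, h3, rfl⟩ <;>
        simp only [Set.mem_ofPred_eq, Set.mem_union, trS] <;> omega
  · have hT2 := hodd hD
    have q := quad_odd b e P s l c ((D - 3) / 2) (by omega) (by omega) (by omega) (by omega)
      (by omega) (by omega) (by omega) (by omega) (by omega) (by omega)
    have six := six_fam e c (by omega) (by omega)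
    have E := evenArr_odd hμ hD q six (by
        rw [Set.disjoint_left]; intro x
        simp only [Set.mem_ofPred_eq, Set.mem_union]; omega)
    have := oddArr hC ftr E (by
        rw [Set.disjoint_left]; intro x
        rcases hb with ⟨h1, h2, h3, rfl⟩ | ⟨h1, h2, h3, rfl⟩ <;>
        simp only [Set.mem_ofPred_eq, Set.mem_union, trS] <;> omega) (by
        rw [Set.disjoint_left]; intro x
        rcases hb with ⟨h1, h2, h3, rfl⟩ | ⟨h1, h2, h3, rfl⟩ <;>
        simp only [Set.mem_ofPred_eq, Set.mem_union, trS] <;> omega) (by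
        rw [Set.disjoint_left]; intro x
        simp only [Set.mem_ofPred_eq, Set.mem_union, trS]; omega)
    refine this.mono ?_
    intro x
    rcases hb with ⟨h1, h2, h3, rfl⟩ | ⟨h1, h2, h3, rfl⟩ <;>
        simp only [Set.mem_ofPred_eq, Set.mem_union, trS] <;> omega

theorem rect_15_5 : Arr 15 5 {x | x ≤ 37} := by
  have tr : Fam 7 3 {x | x ∈ [12, 21, 33, 10, 26, 36, 9, 25, 34, 13, 16, 29, 4, 24, 28, 7, 20, 27,
      6, 31, 37]} := by
    refine ⟨fun i => (![![12, 21, -33], ![10, 26, -36], ![9, 25, -34], ![13, 16, -29],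
      ![4, 24, -28], ![7, 20, -27], ![6, 31, -37]] : Fin 7 → Fin 3 → ℤ) (Fin.ofNat 7 i),
      by decide, by decide, by decide, by simp only [Set.mem_ofPred_eq]; decide⟩
  have qd : Fam 3 4 {x | x ∈ [8, 14, 17, 23, 11, 19, 22, 30, 15, 18, 32, 35]} := by
    refine ⟨fun i => (![![8, -14, -17, 23], ![11, -19, -22, 30], ![15, -18, -32, 35]] :
      Fin 3 → Fin 4 → ℤ) (Fin.ofNat 3 i),
      by decide, by decide, by decide, by simp only [Set.mem_ofPred_eq]; decide⟩
  have E : Arr (2 * 6) (2 * 1) _ := evenArr_even (by norm_num) qd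
  refine (oddArr (μ := 6) (ν := 1) core_B tr E ?_ ?_ ?_).mono ?_
  · rw [Set.disjoint_left]; intro x
    simp only [Set.mem_ofPred_eq, List.mem_cons, List.not_mem_nil, or_false]; omega
  · rw [Set.disjoint_left]; intro x
    simp only [Set.mem_ofPred_eq, List.mem_cons, List.not_mem_nil, or_false]; omega
  · rw [Set.disjoint_left]; simp only [Set.mem_ofPred_eq]; decide
  · intro x
    simp only [Set.mem_ofPred_eq, Set.mem_union, List.mem_cons, List.not_mem_nil, or_false]; omega

theorem rect_17_5 : Arr 17 5 {x | x ≤ 42} := by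
  have tr : Fam 8 3 {x | x ∈ [7, 32, 39, 4, 37, 41, 16, 22, 38, 9, 27, 36, 12, 28, 40, 11, 31, 42,
      14, 19, 33, 6, 24, 30]} := by
    refine ⟨fun i => (![![7, 32, -39], ![4, 37, -41], ![16, 22, -38], ![9, 27, -36],
      ![12, 28, -40], ![11, 31, -42], ![14, 19, -33], ![6, 24, -30]] :
      Fin 8 → Fin 3 → ℤ) (Fin.ofNat 8 i),
      by decide, by decide, by decide, by simp only [Set.mem_ofPred_eq]; decide⟩
  have qd : Fam 2 4 {x | x ∈ [8, 10, 13, 15, 17, 18, 20, 21]} := by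
    refine ⟨fun i => (![![8, -10, -13, 15], ![17, -18, -20, 21]] :
      Fin 2 → Fin 4 → ℤ) (Fin.ofNat 2 i),
      by decide, by decide, by decide, by simp only [Set.mem_ofPred_eq]; decide⟩
  have six : Fam 1 6 {x | x ∈ [23, 25, 26, 29, 34, 35]} := by
    refine ⟨fun i => ![23, -25, -26, 29, 34, -35],
      by decide, by decide, by decide, by simp only [Set.mem_ofPred_eq]; decide⟩
  have E : Arr (2 * 7) (2 * 1) _ := evenArr_odd (by norm_num) (by norm_num) qd six (by
    rw [Set.disjoint_left]; simp only [Set.mem_ofPred_eq]; decide)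
  refine (oddArr (μ := 7) (ν := 1) core_B tr E ?_ ?_ ?_).mono ?_
  · rw [Set.disjoint_left]; intro x
    simp only [Set.mem_ofPred_eq, List.mem_cons, List.not_mem_nil, or_false]; omega
  · rw [Set.disjoint_left]; intro x
    simp only [Set.mem_ofPred_eq, Set.mem_union, List.mem_cons, List.not_mem_nil, or_false]; omega
  · rw [Set.disjoint_left]; simp only [Set.mem_ofPred_eq, Set.mem_union]; decide
  · intro x
    simp only [Set.mem_ofPred_eq, Set.mem_union, List.mem_cons, List.not_mem_nil, or_false]; omega

theorem oddRect (μ ν : ℕ) (hν : 1 ≤ ν) (h : (2 * ν + 3) ^ 2 ≤ 2 * (2 * μ + 3)) :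
    Arr (2 * μ + 3) (2 * ν + 3) {x | x ≤ 2 * (μ * ν) + 3 * (μ + ν) + 4} := by
  have hμ : 5 ≤ μ := by nlinarith
  have hodd : μ * ν % 2 = 1 → (μ + ν) % 2 = 0 := by
    intro h
    rcases Nat.mod_two_eq_zero_or_one μ with h1 | h1 <;>
    rcases Nat.mod_two_eq_zero_or_one ν with h2 | h2 <;>
    rw [Nat.mul_mod, h1, h2] at h <;> omega
  by_cases s1 : ν = 1 ∧ μ = 6
  · obtain ⟨rfl, rfl⟩ := s1; exact rect_15_5
  by_cases s2 : ν = 1 ∧ μ = 7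
  · obtain ⟨rfl, rfl⟩ := s2; exact rect_17_5
  have hbig : ν = 1 ∨ (11 ≤ μ ∧ ν ≤ μ ∧ 2 * μ ≤ μ * ν) := by
    rcases Nat.lt_or_ge ν 2 with h' | h'
    · left; omega
    · right
      refine ⟨by nlinarith, by nlinarith, by nlinarith⟩
  have hpar : ν = 1 → μ * ν = μ := by rintro rfl; simp
  by_cases hc : ((μ + ν) / 2 + μ * ν) % 2 = 0
  · refine oddRect_gen μ ν 5 6 _ _ core_A (by omega) (Or.inl ⟨rfl, rfl, rfl, rfl⟩) hc hodd ?_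
    rcases hbig with h | h
    · have := hpar h; omega
    · omega
  · refine oddRect_gen μ ν 7 4 _ _ core_B (by omega) (Or.inr ⟨rfl, rfl, rfl, rfl⟩) (by omega) hodd ?_
    rcases hbig with h | h
    · have := hpar h; omega
    · omega

theorem evenRect (μ ν : ℕ) (hμ : 3 ≤ μ) (hν : 1 ≤ ν) :
    Arr (2 * μ) (2 * ν) {x | x < 4 * (μ * ν) ∧ x % 2 = 1} := by
  have hD : 3 ≤ μ * ν := by nlinarith
  rcases Nat.mod_two_eq_zero_or_one (μ * ν) with h | h
  · refine evenArr_even h (PairFam.quad (d := 2) (by norm_num) ?_ h)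
    exact PairFam.ap2 1 _ (by norm_num) _ (by
      intro t ht; simp only [Set.mem_ofPred_eq]; omega)
  · have six : Fam 1 6 {x | x < 12 ∧ x % 2 = 1} := by
      refine ⟨fun i => ![11, 7, -1, -3, -5, -9],
        by decide, by decide, by decide, by simp only [Set.mem_ofPred_eq]; decide⟩
    have q : Fam ((μ * ν - 3) / 2) 4 {x | 12 ≤ x ∧ x < 4 * (μ * ν) ∧ x % 2 = 1} := by
      refine PairFam.quad (d := 2) (by norm_num) ?_ (by omega)
      exact PairFam.ap2 13 _ (by norm_num) _ (by
        intro t ht; simp only [Set.mem_ofPred_eq]; omega)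
    refine (evenArr_odd hμ h q six ?_).mono ?_
    · rw [Set.disjoint_left]; intro x; simp only [Set.mem_ofPred_eq]; omega
    · intro x; simp only [Set.mem_ofPred_eq, Set.mem_union]; omega

theorem rectArr (m n : ℕ) (hn : 4 ≤ n) (hpar : m % 2 = n % 2) (hbig : n ^ 2 ≤ 2 * m) :
    Arr m n {x | x + 1 ≤ m * n ∧ (x + m * n) % 2 = 1} := by
  have hm : 8 ≤ m := by nlinarith
  rcases Nat.mod_two_eq_zero_or_one n with h | h
  · obtain ⟨ν, rfl⟩ : ∃ ν, n = 2 * ν := ⟨n / 2, by omega⟩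
    obtain ⟨μ, rfl⟩ : ∃ μ, m = 2 * μ := ⟨m / 2, by omega⟩
    refine (evenRect μ ν (by omega) (by omega)).mono ?_
    intro x
    rw [show 2 * μ * (2 * ν) = 4 * (μ * ν) by ring]
    simp only [Set.mem_ofPred_eq]; omega
  · obtain ⟨ν, rfl⟩ : ∃ ν, n = 2 * ν + 3 := ⟨(n - 3) / 2, by omega⟩
    obtain ⟨μ, rfl⟩ : ∃ μ, m = 2 * μ + 3 := ⟨(m - 3) / 2, by omega⟩
    obtain ⟨a, h1, h2, h3, h4⟩ := oddRect μ ν (by omega) hbig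
    refine ⟨fun i j => 2 * a i j, fun i => ?_, fun i => ?_, fun i j i' j' e => ?_, fun i j => ?_⟩
    · rw [← Finset.mul_sum, h1, mul_zero]
    · rw [← Finset.mul_sum, h2, mul_zero]
    · exact h3 _ _ _ _ (by linarith)
    · have := h4 i j
      rw [show (2 * μ + 3) * (2 * ν + 3) = 2 * (2 * (μ * ν) + 3 * (μ + ν) + 4) + 1 by ring]
      simp only [Set.mem_ofPred_eq] at this ⊢
      omega

theorem magicRect (m n : ℕ) (hn : 4 ≤ n) (hpar : m % 2 = n % 2) (hbig : n ^ 2 ≤ 2 * m) :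
    ∃ a : Fin m → Fin n → ℕ, (∀ i, 2 * ∑ j, a i j = n * (m * n + 1)) ∧
      (∀ j, 2 * ∑ i, a i j = m * (m * n + 1)) ∧
      (∀ i j i' j', a i j = a i' j' → i = i' ∧ j = j') ∧
      (∀ i j, 1 ≤ a i j ∧ a i j ≤ m * n) ∧
      ∀ k, 1 ≤ k → k ≤ m * n → ∃ i j, a i j = k := by
  obtain ⟨a, h1, h2, h3, h4⟩ := rectArr m n hn hpar hbig
  simp only [Set.mem_ofPred_eq] at h4
  let b : Fin m → Fin n → ℕ := fun i j => ((a i j + m * n + 1) / 2).toNat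
  have hb : ∀ i j, (2 : ℤ) * b i j = a i j + m * n + 1 := by
    intro i j
    have := h4 i j
    simp only [b]
    have e : (m : ℤ) * n = ((m * n : ℕ) : ℤ) := by push_cast; rfl
    rw [e]
    omega
  have hinj : ∀ i j i' j', b i j = b i' j' → i = i' ∧ j = j' := by
    intro i j i' j' e
    have e1 := hb i j
    have e2 := hb i' j'
    rw [e] at e1
    exact h3 _ _ _ _ (by linarith)
  have hr : ∀ i j, 1 ≤ b i j ∧ b i j ≤ m * n := by
    intro i j
    have e1 := hb i j
    have := h4 i j
    have e : (m : ℤ) * n = ((m * n : ℕ) : ℤ) := by push_cast; rfl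
    rw [e] at e1
    omega
  refine ⟨b, ?_, ?_, hinj, hr, ?_⟩
  · intro i
    zify
    rw [Finset.mul_sum, Finset.sum_congr rfl (fun j _ => hb i j)]
    simp only [Finset.sum_add_distrib, h1]
    simp
    ring
  · intro j
    zify
    rw [Finset.mul_sum, Finset.sum_congr rfl (fun i _ => hb i j)]
    simp only [Finset.sum_add_distrib, h2]
    simp
    ring
  · intro k hk1 hk2
    have himg : (Finset.univ.image fun x : Fin m × Fin n => b x.1 x.2) = Finset.Icc 1 (m * n) := by
      apply Finset.eq_of_subset_of_card_le
      · intro x hx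
        simp only [Finset.mem_image, Finset.mem_univ, true_and] at hx
        obtain ⟨y, rfl⟩ := hx
        exact Finset.mem_Icc.2 (hr _ _)
      · rw [Finset.card_image_of_injective]
        · simp
        · rintro ⟨i, j⟩ ⟨i', j'⟩ e
          obtain ⟨rfl, rfl⟩ := hinj _ _ _ _ e
          rfl
    have : k ∈ Finset.Icc 1 (m * n) := Finset.mem_Icc.2 ⟨hk1, hk2⟩
    rw [← himg] at this
    simp only [Finset.mem_image, Finset.mem_univ, true_and] at this
    obtain ⟨y, hy⟩ := this
    exact ⟨_, _, hy⟩

theorem vertexSum_eq {V : Type*} [Fintype V] (G : SimpleGraph V) (f : Sym2 V → ℕ) (v : V) :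
    vertexSum G f v = ∑ w, (open Classical in if G.Adj v w then f s(v, w) else 0) := by
  classical
  have h : G.incidenceSet v = (fun w => s(v, w)) '' G.neighborSet v := by
    ext x
    constructor
    · rintro ⟨h1, h2⟩
      obtain ⟨w, rfl⟩ := h2
      exact ⟨w, h1, rfl⟩
    · rintro ⟨w, h1, rfl⟩
      exact ⟨h1, Sym2.mem_mk_left _ _⟩
  unfold vertexSum
  rw [h, finsum_mem_image, finsum_mem_def, finsum_eq_sum_of_fintype]
  · apply Finset.sum_congr rfl
    intro w _
    simp [Set.indicator_apply]
  · intro a _ b _ e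
    exact Sym2.congr_right.1 e

theorem sum_bound (A : Finset ℕ) : ∀ e, (∀ x ∈ A, x ≤ e) →
    2 * ∑ x ∈ A, x + A.card * A.card ≤ 2 * (A.card * e) + A.card := by
  classical
  induction A using Finset.induction_on_max with
  | empty => simp
  | insert a s hs ih =>
    intro e he
    have hn : a ∉ s := fun h => lt_irrefl _ (hs a h)
    rw [Finset.sum_insert hn, Finset.card_insert_of_notMem hn]
    have ha := he a (Finset.mem_insert_self _ _)
    rcases s.eq_empty_or_nonempty with rfl | ⟨y, hy⟩
    · simp; omega
    · have h1 := hs y hy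
      obtain ⟨a', rfl⟩ : ∃ a', a = a' + 1 := ⟨a - 1, by omega⟩
      have := ih a' (fun x hx => by have := hs x hx; omega)
      obtain ⟨r, rfl⟩ : ∃ r, e = a' + 1 + r := ⟨e - (a' + 1), by omega⟩
      nlinarith

theorem vs_bound {V : Type*} [Fintype V] (G : SimpleGraph V) (f : Sym2 V → ℕ)
    (hf : Set.BijOn f G.edgeSet (Set.Icc 1 G.edgeSet.ncard)) (v : V) :
    ∃ d, d + 1 ≤ Fintype.card V ∧
      2 * vertexSum G f v + d * d ≤ 2 * (d * G.edgeSet.ncard) + d := by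
  classical
  let A : Finset ℕ := (G.neighborFinset v).image fun w => f s(v, w)
  have inj : Set.InjOn (fun w => f s(v, w)) (G.neighborFinset v : Set V) := by
    intro a ha b hb e
    simp at ha hb
    have := hf.injOn (G.mem_edgeSet.2 ha) (G.mem_edgeSet.2 hb) e
    exact Sym2.congr_right.1 this
  have hA : A.card = G.degree v := Finset.card_image_of_injOn inj
  have hsum : vertexSum G f v = ∑ x ∈ A, x := by
    rw [vertexSum_eq, Finset.sum_image inj, ← Finset.sum_filter]
    apply Finset.sum_congr _ (fun _ _ => rfl)
    ext w; simp
  refine ⟨A.card, ?_, ?_⟩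
  · rw [hA]; exact G.degree_lt_card_verts v
  · rw [hsum]
    apply sum_bound
    intro x hx
    simp only [A, Finset.mem_image, SimpleGraph.mem_neighborFinset] at hx
    obtain ⟨w, hw, rfl⟩ := hx
    exact (hf.mapsTo (G.mem_edgeSet.2 hw)).2

theorem edge_bound {V : Type*} [Fintype V] (G : SimpleGraph V) :
    2 * G.edgeSet.ncard + Fintype.card V ≤ Fintype.card V * Fintype.card V := by
  classical
  have h := G.card_edgeFinset_le_card_choose_two
  rw [← G.coe_edgeFinset, Set.ncard_coe_finset]
  have h2 := Nat.choose_two_right (Fintype.card V)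
  have h3 : 2 * (Fintype.card V).choose 2 ≤ Fintype.card V * (Fintype.card V - 1) := by omega
  rcases Nat.eq_zero_or_pos (Fintype.card V) with h0 | h0
  · rw [h0] at h3 ⊢; rw [h0] at h; simp at h ⊢; omega
  · obtain ⟨k, hk⟩ : ∃ k, Fintype.card V = k + 1 := ⟨Fintype.card V - 1, by omega⟩
    rw [hk] at h h3 ⊢
    simp at h3
    nlinarith

theorem key_ineq (m n d e x R C : ℕ) (hn : 4 ≤ n) (hbig : n ^ 2 ≤ 2 * m) (hd : d + 1 ≤ m)
    (he : 2 * e + m ≤ m * m) (hx : 2 * x + d * d ≤ 2 * (d * e) + d)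
    (hR : 2 * R = n * (m * n + 1)) (hC : 2 * C = m * (m * n + 1)) :
    x + (n * e + R) < m * e + C := by
  have hm : 2 * n ≤ m := by nlinarith
  rcases le_total (d + n) m with h | h
  · have h1 : x ≤ d * e := by
      have : d ≤ d * d := by nlinarith
      omega
    have h2 : (d + n) * e ≤ m * e := Nat.mul_le_mul_right _ h
    have h3 : R < C := by nlinarith
    nlinarith
  · obtain ⟨t, ht⟩ : ∃ t, m = d + 1 + t := ⟨m - (d + 1), by omega⟩
    obtain ⟨k, hk⟩ : ∃ k, n = k + 1 + t := ⟨n - (1 + t), by omega⟩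
    zify at *
    have hdd : (d : ℤ) = m - 1 - t := by linarith
    have hkk : (k : ℤ) = n - 1 - t := by linarith
    have hk0 : (0 : ℤ) ≤ k := by positivity
    have ht0 : (0 : ℤ) ≤ t := by positivity
    -- 2 (x + n e - m e) ≤ 2 k e - d(d-1) ≤ k m (m-1) - d (d-1)
    have s1 : (2 * (x + n * e - m * e) : ℤ) ≤ 2 * k * e - d * (d - 1) := by
      rw [hkk]
      have : (2 * (d * e) : ℤ) = 2 * (m - 1 - t) * e := by rw [hdd]; ring
      linarith
    have s2 : (2 * k * e : ℤ) ≤ k * (m * m - m) := by nlinarith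
    have s3 : (k * (m * m - m) - d * (d - 1) : ℤ) ≤ (n - 1) * (m * m - m) - (m - 1) * (m - 2) := by
      rw [hkk, hdd]
      have : (0 : ℤ) ≤ t * (m * m - 3 * m + 3 + t) := by
        apply mul_nonneg ht0; nlinarith
      linarith
    have s4 : ((n - 1) * (m * m - m) - (m - 1) * (m - 2) : ℤ) < (m - n) * (m * n + 1) := by
      have a1 : (0 : ℤ) ≤ m * (2 * m - n ^ 2) := by
        apply mul_nonneg (by positivity); linarith
      have a2 : (0 : ℤ) < m * (n - 3) + 2 - n := by nlinarith
      linarith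
    linarith

theorem join_ll {V : Type*} (G : SimpleGraph V) (n : ℕ) (u v : V) :
    (joinEmpty G n).Adj (Sum.inl u) (Sum.inl v) ↔ G.Adj u v := by
  simp only [joinEmpty, SimpleGraph.fromRel_adj]
  constructor
  · rintro ⟨_, (⟨a, b, h1, h2, h⟩ | h) | (⟨a, b, h1, h2, h⟩ | h)⟩
    · cases h1; cases h2; exact h
    · simp at h
    · cases h1; cases h2; exact h.symm
    · simp at h
  · intro h
    exact ⟨by simpa using h.ne, Or.inl (Or.inl ⟨u, v, rfl, rfl, h⟩)⟩

theorem join_lr {V : Type*} (G : SimpleGraph V) (n : ℕ) (u : V) (j : Fin n) :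
    (joinEmpty G n).Adj (Sum.inl u) (Sum.inr j) := by
  simp [joinEmpty, SimpleGraph.fromRel_adj]

theorem join_rl {V : Type*} (G : SimpleGraph V) (n : ℕ) (u : V) (j : Fin n) :
    (joinEmpty G n).Adj (Sum.inr j) (Sum.inl u) := (join_lr G n u j).symm

theorem join_rr {V : Type*} (G : SimpleGraph V) (n : ℕ) (i j : Fin n) :
    ¬ (joinEmpty G n).Adj (Sum.inr i) (Sum.inr j) := by
  simp [joinEmpty, SimpleGraph.fromRel_adj]

def joinLab {V : Type*} (n : ℕ) (f : Sym2 V → ℕ) (c : V → Fin n → ℕ) : Sym2 (V ⊕ Fin n) → ℕ :=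
  Sym2.lift ⟨fun x y => match x, y with
    | Sum.inl u, Sum.inl v => f s(u, v)
    | Sum.inl u, Sum.inr j => c u j
    | Sum.inr j, Sum.inl u => c u j
    | Sum.inr _, Sum.inr _ => 0, by
      rintro (u | i) (v | j)
      · simp [Sym2.eq_swap]
      · rfl
      · rfl
      · rfl⟩

theorem colorCount_lower {V : Type*} [Fintype V] (G : SimpleGraph V) (n : ℕ) (hn : 4 ≤ n)
    (g : Sym2 (V ⊕ Fin n) → ℕ) (hg : IsLocalAntimagic (joinEmpty G n) g) (k : ℕ)
    (hk : G.chromaticNumber = (k : ℕ∞)) : k + 1 ≤ colorCount (joinEmpty G n) g := by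
  classical
  let φ := vertexSum (joinEmpty G n) g
  let j0 : Fin n := ⟨0, by omega⟩
  let R : Finset ℕ := Finset.univ.image φ
  have hcc : colorCount (joinEmpty G n) g = R.card := by
    unfold colorCount
    rw [← Set.ncard_coe_finset]
    congr 1
    ext x; simp [R, φ]
  let R' := R.erase (φ (Sum.inr j0))
  have hR' : R'.card + 1 = R.card :=
    Finset.card_erase_add_one (Finset.mem_image_of_mem _ (Finset.mem_univ _))
  let C : G.Coloring R' := SimpleGraph.Coloring.mk
    (fun u => ⟨φ (Sum.inl u), Finset.mem_erase.2
      ⟨hg.2 _ _ (join_lr G n u j0), Finset.mem_image_of_mem _ (Finset.mem_univ _)⟩⟩) (by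
      intro u v huv e
      exact hg.2 _ _ ((join_ll G n u v).2 huv) (congrArg Subtype.val e))
  have hcol := C.colorable
  rw [Fintype.card_coe] at hcol
  have := hcol.chromaticNumber_le
  rw [hk] at this
  have : k ≤ R'.card := by exact_mod_cast this
  omega

theorem chiLA_join_eq_of_large_order {V : Type*} [Fintype V] (G : SimpleGraph V)
    (hG : G.Connected) (m n : ℕ) (hm : Fintype.card V = m) (hm3 : 3 ≤ m)
    (hn : 4 ≤ n) (hpar : m % 2 = n % 2) (hbig : n ^ 2 ≤ 2 * m)
    (hchi : G.chromaticNumber = (chiLA G : ℕ∞)) :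
    chiLA (joinEmpty G n) = chiLA G + 1 := by
  classical
  -- the labeling of `G`
  have hne : { k | ∃ f, IsLocalAntimagic G f ∧ colorCount G f = k }.Nonempty := by
    by_contra h
    rw [Set.not_nonempty_iff_eq_empty] at h
    have h0 : chiLA G = 0 := by unfold chiLA; rw [h]; simp
    rw [h0] at hchi
    haveI := hG.nonempty
    have : G.Colorable 0 := by
      apply SimpleGraph.chromaticNumber_le_iff_colorable.1
      rw [hchi]
    obtain ⟨C⟩ := this
    exact (C (Classical.arbitrary V)).elim0
  obtain ⟨f, hf, hfk⟩ := Nat.sInf_mem hne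
  change colorCount G f = chiLA G at hfk
  obtain ⟨a, hrow, hcol, ainj, arng, asurj⟩ := magicRect m n hn hpar hbig
  let φ : V ≃ Fin m := Fintype.equivFinOfCardEq hm
  obtain ⟨e, he⟩ : ∃ e, e = G.edgeSet.ncard := ⟨_, rfl⟩
  let g := joinLab n f (fun u j => e + a (φ u) j)
  have gll : ∀ u v, g s(Sum.inl u, Sum.inl v) = f s(u, v) := fun u v => rfl
  have glr : ∀ u j, g s(Sum.inl u, Sum.inr j) = e + a (φ u) j := fun u j => rfl
  have grl : ∀ u j, g s(Sum.inr j, Sum.inl u) = e + a (φ u) j := fun u j => rfl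
  have hfb : Set.BijOn f G.edgeSet (Set.Icc 1 e) := he ▸ hf.1
  obtain ⟨R, hR⟩ : ∃ R, ∀ i, ∑ j, a i j = R := by
    refine ⟨n * (m * n + 1) / 2, fun i => ?_⟩
    have := hrow i; omega
  obtain ⟨C, hC⟩ : ∃ C, ∀ j, ∑ i, a i j = C := by
    refine ⟨m * (m * n + 1) / 2, fun i => ?_⟩
    have := hcol i; omega
  have hR2 : 2 * R = n * (m * n + 1) := by rw [← hR ⟨0, by omega⟩]; exact hrow _
  have hC2 : 2 * C = m * (m * n + 1) := by rw [← hC ⟨0, by omega⟩]; exact hcol _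
  have vl : ∀ u, vertexSum (joinEmpty G n) g (Sum.inl u) = vertexSum G f u + (n * e + R) := by
    intro u
    rw [vertexSum_eq, vertexSum_eq, Fintype.sum_sum_type]
    simp only [join_ll, join_lr, if_true, gll, glr]
    rw [Finset.sum_add_distrib, hR]
    simp
  have vr : ∀ j, vertexSum (joinEmpty G n) g (Sum.inr j) = m * e + C := by
    intro j
    rw [vertexSum_eq, Fintype.sum_sum_type]
    simp only [join_rl, join_rr, if_true, if_false, grl]
    rw [Finset.sum_add_distrib, Equiv.sum_comp φ (fun i => a i j), hC]
    simp [hm]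
  have hlt : ∀ u, vertexSum G f u + (n * e + R) < m * e + C := by
    intro u
    obtain ⟨d, hd, hx⟩ := vs_bound G f hf.1 u
    have heb := edge_bound G
    rw [hm, ← he] at heb
    rw [← he] at hx
    rw [hm] at hd
    exact key_ineq m n d e _ R C hn hbig hd heb hx hR2 hC2
  -- classification of the edges
  have hedge : ∀ x ∈ (joinEmpty G n).edgeSet,
      (∃ u v, G.Adj u v ∧ x = s(Sum.inl u, Sum.inl v)) ∨
      (∃ u j, x = s(Sum.inl u, Sum.inr j)) := by
    intro x
    induction x using Sym2.ind with
    | _ x y =>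
      intro h
      rw [SimpleGraph.mem_edgeSet] at h
      rcases x with u | i <;> rcases y with v | j
      · exact Or.inl ⟨u, v, (join_ll _ _ _ _).1 h, rfl⟩
      · exact Or.inr ⟨u, j, rfl⟩
      · exact Or.inr ⟨v, i, Sym2.eq_swap⟩
      · exact absurd h (join_rr _ _ _ _)
  have ginj : Set.InjOn g (joinEmpty G n).edgeSet := by
    intro x hx y hy hxy
    rcases hedge x hx with ⟨u, v, huv, rfl⟩ | ⟨u, j, rfl⟩ <;>
    rcases hedge y hy with ⟨u', v', huv', rfl⟩ | ⟨u', j', rfl⟩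
    · rw [gll, gll] at hxy
      have := hfb.injOn (G.mem_edgeSet.2 huv) (G.mem_edgeSet.2 huv') hxy
      exact congrArg (Sym2.map Sum.inl) this
    · rw [gll, glr] at hxy
      have h1 := (hfb.mapsTo (G.mem_edgeSet.2 huv)).2
      have h2 := (arng (φ u') j').1
      omega
    · rw [gll, glr] at hxy
      have h1 := (hfb.mapsTo (G.mem_edgeSet.2 huv')).2
      have h2 := (arng (φ u) j).1
      omega
    · rw [glr, glr] at hxy
      obtain ⟨h1, h2⟩ := ainj _ _ _ _ (Nat.add_left_cancel hxy)
      rw [φ.injective h1, h2]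
  have gimg : g '' (joinEmpty G n).edgeSet = Set.Icc 1 (e + m * n) := by
    ext k
    constructor
    · rintro ⟨x, hx, rfl⟩
      rcases hedge x hx with ⟨u, v, huv, rfl⟩ | ⟨u, j, rfl⟩
      · rw [gll]
        have h1 := hfb.mapsTo (G.mem_edgeSet.2 huv)
        exact ⟨h1.1, h1.2.trans (Nat.le_add_right _ _)⟩
      · rw [glr]
        have h1 := arng (φ u) j
        exact ⟨by omega, by omega⟩
    · rintro ⟨h1, h2⟩
      rcases le_or_gt k e with h | h
      · obtain ⟨x, hx, hxk⟩ := hfb.surjOn ⟨h1, h⟩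
        induction x using Sym2.ind with
        | _ u v =>
          exact ⟨s(Sum.inl u, Sum.inl v), (join_ll _ _ _ _).2 hx, hxk⟩
      · obtain ⟨i, j, hij⟩ := asurj (k - e) (by omega) (by omega)
        refine ⟨s(Sum.inl (φ.symm i), Sum.inr j), join_lr _ _ _ _, ?_⟩
        rw [glr, Equiv.apply_symm_apply, hij]
        omega
  have hcard : (joinEmpty G n).edgeSet.ncard = e + m * n := by
    rw [← Set.ncard_image_of_injOn ginj, gimg, ← Finset.coe_Icc, Set.ncard_coe_finset]
    simp
  have hg : IsLocalAntimagic (joinEmpty G n) g := by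
    refine ⟨?_, ?_⟩
    · rw [hcard, ← gimg]
      exact ginj.bijOn_image
    · rintro (u | i) (v | j) h
      · rw [vl, vl]
        have := hf.2 u v ((join_ll _ _ _ _).1 h)
        omega
      · rw [vl, vr]; exact (hlt u).ne
      · rw [vl, vr]; exact (hlt v).ne'
      · exact absurd h (join_rr _ _ _ _)
  have hup : colorCount (joinEmpty G n) g ≤ chiLA G + 1 := by
    rw [← hfk]
    unfold colorCount
    have hsub : Set.range (vertexSum (joinEmpty G n) g) ⊆
        insert (m * e + C) ((fun x => x + (n * e + R)) '' Set.range (vertexSum G f)) := by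
      rintro _ ⟨u | j, rfl⟩
      · rw [vl]; exact Or.inr ⟨_, ⟨u, rfl⟩, rfl⟩
      · rw [vr]; exact Or.inl rfl
    have hfin : (Set.range (vertexSum G f)).Finite := Set.finite_range _
    refine (Set.ncard_le_ncard hsub ((hfin.image _).insert _)).trans ?_
    refine (Set.ncard_insert_le _ _).trans ?_
    exact Nat.add_le_add_right (Set.ncard_image_le hfin) 1
  apply le_antisymm
  · have hmem : colorCount (joinEmpty G n) g ∈
        { k | ∃ f, IsLocalAntimagic (joinEmpty G n) f ∧ colorCount (joinEmpty G n) f = k } :=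
      ⟨g, hg, rfl⟩
    exact (Nat.sInf_le hmem).trans hup
  · refine le_csInf ⟨_, g, hg, rfl⟩ ?_
    rintro k ⟨g', hg', rfl⟩
    exact colorCount_lower G n hn g' hg' _ hchi
end
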